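/- arXiv:0807.2666 — 2 statements merged into one kernel-verified Lean document; each statement's English description precedes it below -/
import Mathlib

section
/- Suppose the i.i.d. source/side-information process satisfies that (S1, W2) is independent of (S2, W1), and suppose the strong source-channel interference conditions hold for source-channel rate b, namely b·I(X1;Y1|X2) ≤ b·I(X1;Y2|X2) + I(S1;W2) and b·I(X2;Y2|X1) ≤ b·I(X2;Y1|X1) + I(S2;W1) for all single-letter distributions of the form p(w1,w2,s1,s2)·p(x1|s1)·p(x2|s2) with (Y1, Y2) obtained through the channel p(y1,y2|x1,x2). Then for all block lengths m, n with n/m = b and all encoders X1^n = f1(S1^m), X2^n = f2(S2^m), the n-letter inequalities hold: I(X2^n; Y2^n | X1^n) ≤ I(X2^n; Y1^n | X1^n) + I(S2^m; W1^m) and I(X1^n; Y1^n | X2^n) ≤ I(X1^n; Y2^n | X2^n) + I(S1^m; W2^m). -/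
open scoped BigOperators Classical

noncomputable section

/-- Probability that the random variable `X` equals `a`, under the pmf `μ`
on the finite sample space `Ω`. -/
def prD {Ω α : Type} [Fintype Ω] (μ : Ω → ℝ) (X : Ω → α) (a : α) : ℝ :=
  ∑ ω, if X ω = a then μ ω else 0

/-- Shannon entropy (in nats) of the random variable `X` under the pmf `μ`. -/
def ent {Ω α : Type} [Fintype Ω] [Fintype α] (μ : Ω → ℝ) (X : Ω → α) : ℝ :=
  -∑ a, prD μ X a * Real.log (prD μ X a)

/-- Conditional entropy `H(X | Y)` under the pmf `μ`. -/
def condEnt {Ω α β : Type} [Fintype Ω] [Fintype α] [Fintype β]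
    (μ : Ω → ℝ) (X : Ω → α) (Y : Ω → β) : ℝ :=
  ent μ (fun ω => (X ω, Y ω)) - ent μ Y

/-- Mutual information `I(X ; Y)` under the pmf `μ`. -/
def mutInf {Ω α β : Type} [Fintype Ω] [Fintype α] [Fintype β]
    (μ : Ω → ℝ) (X : Ω → α) (Y : Ω → β) : ℝ :=
  ent μ X + ent μ Y - ent μ (fun ω => (X ω, Y ω))

/-- Conditional mutual information `I(X ; Y | Z)` under the pmf `μ`. -/
def condMutInf {Ω α β γ : Type} [Fintype Ω] [Fintype α] [Fintype β] [Fintype γ]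
    (μ : Ω → ℝ) (X : Ω → α) (Y : Ω → β) (Z : Ω → γ) : ℝ :=
  condEnt μ X Z - condEnt μ X (fun ω => (Y ω, Z ω))

/-- `p` is a probability mass function on the finite type `α`. -/
def IsPmf {α : Type} [Fintype α] (p : α → ℝ) : Prop :=
  (∀ a, 0 ≤ p a) ∧ ∑ a, p a = 1


/-- The single-letter joint distribution
`p(s1,s2,w1,w2) p(x1|s1) p(x2|s2) p(y1,y2|x1,x2)`. -/
def sciMeasure {S1 S2 W1 W2 X1 X2 Y1 Y2 : Type}
    (pS : S1 × S2 × W1 × W2 → ℝ) (k1 : S1 → X1 → ℝ) (k2 : S2 → X2 → ℝ)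
    (chan : X1 → X2 → Y1 × Y2 → ℝ) :
    (S1 × S2 × W1 × W2) × X1 × X2 × (Y1 × Y2) → ℝ :=
  fun z => pS z.1 * k1 z.1.1 z.2.1 * k2 z.1.2.1 z.2.2.1 * chan z.2.1 z.2.2.1 z.2.2.2

/-- The distribution of the source blocks `(S1,S2,W1,W2)^m` (i.i.d. `pS`) together
with the channel output blocks `(Y1,Y2)^n` produced from the deterministic channel
inputs `X1^n = f1(S1^m)`, `X2^n = f2(S2^m)` through `n` memoryless uses of `chan`. -/
def icBlockMeasure {S1 S2 W1 W2 X1 X2 Y1 Y2 : Type}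
    (pS : S1 × S2 × W1 × W2 → ℝ) (chan : X1 → X2 → Y1 × Y2 → ℝ) (m n : ℕ)
    (f1 : (Fin m → S1) → Fin n → X1) (f2 : (Fin m → S2) → Fin n → X2) :
    (Fin m → S1 × S2 × W1 × W2) × (Fin n → Y1 × Y2) → ℝ :=
  fun ω => (∏ i, pS (ω.1 i)) *
    ∏ j, chan (f1 (fun i => (ω.1 i).1) j) (f2 (fun i => (ω.1 i).2.1) j) (ω.2 j)

/-!
Fix the other user's input letter `z`, so that each receiver sees a channel with input `x`. The
single-letter hypothesis, tested on input letters independent of the sources and a constant `z`,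
says that the mutual information to one receiver exceeds that to the other by at most
`I(S; W) / b`, whatever the input distribution. Such a bound tensorizes: in a product of two
channels, replace one factor at a time and split off the unchanged factor by the chain rule
`I(X, A; Y, B) = I(X; Y | B) + I(A; B)`. For `n` channel uses the excess is therefore at most
`n * I(S; W) / b = m * I(S; W)`, for any joint distribution of the input blocks; finally,
`I(S ^ m; W ^ m) = m * I(S; W)` because the source is memoryless.
-/

/-- The entropy of a finite measure given by its mass function; unlike `ent` it refers to no
random variable, and total mass `1` is not required. -/
def shannon {α : Type} [Fintype α] (p : α → ℝ) : ℝ :=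
  ∑ a, Real.negMulLog (p a)

/-- The output measure of the channel `V` for the input measure `q`. -/
def outputLaw {X Y : Type} [Fintype X] (q : X → ℝ) (V : X → Y → ℝ) (y : Y) : ℝ :=
  ∑ x, q x * V x y

/-- The mutual information between the input and the output of the channel `V` for the input
measure `q`. The term `negMulLog (∑ x, q x)` vanishes for a probability measure; with it the
functional is homogeneous in `q`, so that conditional mutual information is a sum of such terms
over unnormalized conditional laws. -/
def channelInf {X Y : Type} [Fintype X] [Fintype Y] (q : X → ℝ) (V : X → Y → ℝ) : ℝ :=
  shannon (outputLaw q V) - Real.negMulLog (∑ x, q x) - ∑ x, q x * shannon (V x)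

/-- The channel `V` is more capable than `W` (in the sense of Körner and Marton) up to a loss of
`c` nats of mutual information. -/
def MoreCapableUpTo {X Y Y' : Type} [Fintype X] [Fintype Y] [Fintype Y'] (c : ℝ)
    (V : X → Y → ℝ) (W : X → Y' → ℝ) : Prop :=
  ∀ q : X → ℝ, IsPmf q → channelInf q W ≤ channelInf q V + c

/-- Two channels used in parallel, with independent noise. -/
def prodChannel {X Y A B : Type} (V : X → Y → ℝ) (W : A → B → ℝ) : X × A → Y × B → ℝ :=
  fun x y => V x.1 y.1 * W x.2 y.2

/-- A finite family of channels used in parallel, with independent noise. -/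
def piChannel {ι X Y : Type} [Fintype ι] (V : ι → X → Y → ℝ) : (ι → X) → (ι → Y) → ℝ :=
  fun x y => ∏ j, V j (x j) (y j)

/-- The joint law of a state with law `P` and of the output of the channel `K` fed with it. -/
def channelJoint {Ω Θ : Type} (P : Ω → ℝ) (K : Ω → Θ → ℝ) : Ω × Θ → ℝ :=
  fun ω => P ω.1 * K ω.1 ω.2

/-- The joint law of a source with law `P` and of the outputs of `n` memoryless uses of a two-user
channel whose input blocks `f s` and `g s` may both depend on the whole source outcome `s`. -/
def codedMeasure {S X Z Θ : Type} {n : ℕ} (P : S → ℝ) (K : X → Z → Θ → ℝ)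
    (f : S → Fin n → X) (g : S → Fin n → Z) : S × (Fin n → Θ) → ℝ :=
  channelJoint P fun s y => ∏ j, K (f s j) (g s j) (y j)

section Parallel

variable {X Y A B : Type}

lemma prodChannel_prodComm (V : X → Y → ℝ) (W : A → B → ℝ) :
    (fun x y => prodChannel W V (Equiv.prodComm X A x) (Equiv.prodComm Y B y)) =
      prodChannel V W :=
  funext₂ fun _ _ => mul_comm _ _

lemma piChannel_consEquiv {n : ℕ} (V : Fin (n + 1) → X → Y → ℝ) :
    (fun x y => piChannel V (Fin.consEquiv (fun _ => X) x) (Fin.consEquiv (fun _ => Y) y)) =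
      prodChannel (V 0) (piChannel fun j => V j.succ) :=
  funext₂ fun _ _ => Fin.prod_univ_succ _

end Parallel

section Shannon

variable {α β : Type} [Fintype α] [Fintype β]

lemma shannon_comp_equiv (e : β ≃ α) (p : α → ℝ) : shannon (fun b => p (e b)) = shannon p :=
  Equiv.sum_comp e fun a => Real.negMulLog (p a)

lemma shannon_const_mul (t : ℝ) (p : α → ℝ) :
    shannon (fun a => t * p a) = (∑ a, p a) * Real.negMulLog t + t * shannon p := by
  simp only [shannon, Real.negMulLog_mul, Finset.sum_add_distrib, Finset.sum_mul, Finset.mul_sum]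

lemma shannon_prod_type (p : α × β → ℝ) : shannon p = ∑ a, shannon fun b => p (a, b) :=
  Fintype.sum_prod_type _

lemma shannon_prod_type_right (p : α × β → ℝ) : shannon p = ∑ b, shannon fun a => p (a, b) :=
  Fintype.sum_prod_type_right _

lemma shannon_mul {p : α → ℝ} {q : β → ℝ} (hp : ∑ a, p a = 1) (hq : ∑ b, q b = 1) :
    shannon (fun z : α × β => p z.1 * q z.2) = shannon p + shannon q := by
  rw [shannon_prod_type]
  simp only [shannon_const_mul, hq, one_mul, Finset.sum_add_distrib, ← Finset.sum_mul, hp]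
  rfl

lemma sum_pi_prod_eq_one {ι : Type} [Fintype ι] [DecidableEq ι] {p : ι → α → ℝ}
    (hp : ∀ j, ∑ a, p j a = 1) : ∑ a : ι → α, ∏ j, p j (a j) = 1 := by
  rw [← Fintype.prod_sum]
  simp only [hp, Finset.prod_const_one]

lemma shannon_pi {n : ℕ} {p : Fin n → α → ℝ} (hp : ∀ j, ∑ a, p j a = 1) :
    shannon (fun a : Fin n → α => ∏ j, p j (a j)) = ∑ j, shannon (p j) := by
  induction n with
  | zero => simp [shannon]
  | succ n ih =>
    rw [← shannon_comp_equiv (Fin.consEquiv fun _ => α), Fin.sum_univ_succ,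
      ← ih fun j => hp j.succ,
      ← shannon_mul (hp 0) (sum_pi_prod_eq_one fun j : Fin n => hp j.succ)]
    simp only [Fin.consEquiv, Equiv.coe_fn_mk, Fin.prod_univ_succ, Fin.cons_zero, Fin.cons_succ]

end Shannon

section Pmf

variable {α : Type} [Fintype α]

lemma IsPmf.pi {ι : Type} [Fintype ι] [DecidableEq ι] {p : ι → α → ℝ} (hp : ∀ j, IsPmf (p j)) :
    IsPmf fun a : ι → α => ∏ j, p j (a j) :=
  ⟨fun _ => Finset.prod_nonneg fun j _ => (hp j).1 _, sum_pi_prod_eq_one fun j => (hp j).2⟩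

lemma isPmf_single [DecidableEq α] (a : α) : IsPmf (Pi.single a (1 : ℝ)) :=
  ⟨fun a' => (Pi.single_nonneg.2 zero_le_one : (0 : α → ℝ) ≤ Pi.single a 1) a', by simp⟩

end Pmf

section ChannelInf

variable {X Y A B : Type} [Fintype X] [Fintype Y] [Fintype A] [Fintype B]

lemma sum_outputLaw (q : X → ℝ) {V : X → Y → ℝ} (hV : ∀ x, ∑ y, V x y = 1) :
    ∑ y, outputLaw q V y = ∑ x, q x := by
  simp only [outputLaw]
  rw [Finset.sum_comm]
  simp only [← Finset.mul_sum, hV, mul_one]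

lemma channelInf_const_mul (t : ℝ) (q : X → ℝ) {V : X → Y → ℝ} (hV : ∀ x, ∑ y, V x y = 1) :
    channelInf (fun x => t * q x) V = t * channelInf q V := by
  have hout : outputLaw (fun x => t * q x) V = fun y => t * outputLaw q V y := by
    ext y
    simp only [outputLaw, Finset.mul_sum, mul_assoc]
  simp only [channelInf, hout, shannon_const_mul, sum_outputLaw q hV, ← Finset.mul_sum,
    Real.negMulLog_mul, mul_assoc]
  ring

lemma channelInf_comp_equiv (i : A ≃ X) (j : B ≃ Y) (q : X → ℝ) (V : X → Y → ℝ) :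
    channelInf (fun a => q (i a)) (fun a b => V (i a) (j b)) = channelInf q V := by
  have hout : outputLaw (fun a => q (i a)) (fun a b => V (i a) (j b)) =
      fun b => outputLaw q V (j b) := by
    ext b
    exact Equiv.sum_comp i fun x => q x * V x (j b)
  simp only [channelInf, hout, shannon_comp_equiv, Equiv.sum_comp i q]
  rw [Equiv.sum_comp i fun x => q x * shannon (V x)]

lemma channelInf_prodChannel (q : X × A → ℝ) {V : X → Y → ℝ} {W : A → B → ℝ}
    (hV : ∀ x, ∑ y, V x y = 1) (hW : ∀ a, ∑ b, W a b = 1) :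
    channelInf q (prodChannel V W) =
      ∑ b, channelInf (fun x => ∑ a, q (x, a) * W a b) V +
        channelInf (fun a => ∑ x, q (x, a)) W := by
  have hjoint : shannon (outputLaw q (prodChannel V W)) =
      ∑ b, shannon (outputLaw (fun x => ∑ a, q (x, a) * W a b) V) := by
    rw [shannon_prod_type_right]
    refine Finset.sum_congr rfl fun b _ => congrArg shannon (funext fun y => ?_)
    simp only [outputLaw, prodChannel, Fintype.sum_prod_type, Finset.sum_mul]
    exact Finset.sum_congr rfl fun x _ => Finset.sum_congr rfl fun a _ => by ring
  have hmarginal : shannon (outputLaw (fun a => ∑ x, q (x, a)) W) =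
      ∑ b, Real.negMulLog (∑ x, ∑ a, q (x, a) * W a b) := by
    refine Finset.sum_congr rfl fun b _ => congrArg Real.negMulLog ?_
    simp only [outputLaw, Finset.sum_mul]
    exact Finset.sum_comm
  have hforget : ∑ b, ∑ x, (∑ a, q (x, a) * W a b) * shannon (V x) =
      ∑ z, q z * shannon (V z.1) := by
    rw [Finset.sum_comm, Fintype.sum_prod_type]
    refine Finset.sum_congr rfl fun x _ => ?_
    rw [← Finset.sum_mul, Finset.sum_comm, Finset.sum_mul]
    simp only [← Finset.mul_sum, hW, mul_one]
  have hnoise : ∑ z, q z * shannon (prodChannel V W z) =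
      ∑ z, q z * shannon (V z.1) + ∑ a, (∑ x, q (x, a)) * shannon (W a) := by
    have hsplit (z : X × A) : shannon (prodChannel V W z) = shannon (V z.1) + shannon (W z.2) :=
      shannon_mul (hV z.1) (hW z.2)
    simp only [hsplit, mul_add, Finset.sum_add_distrib, Finset.sum_mul]
    rw [Fintype.sum_prod_type_right fun z => q z * shannon (W z.2)]
  simp only [channelInf, Finset.sum_sub_distrib, hjoint, hmarginal, hforget, hnoise,
    Fintype.sum_prod_type_right q]
  ring

end ChannelInf

section MoreCapable

variable {X Y Y' A B B' : Type} [Fintype X] [Fintype Y] [Fintype Y'] [Fintype A] [Fintype B]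
  [Fintype B'] {c c' : ℝ}

lemma MoreCapableUpTo.channelInf_le {V : X → Y → ℝ} {W : X → Y' → ℝ}
    (h : MoreCapableUpTo c V W) (hV : ∀ x, ∑ y, V x y = 1) (hW : ∀ x, ∑ y, W x y = 1)
    {q : X → ℝ} (hq : ∀ x, 0 ≤ q x) :
    channelInf q W ≤ channelInf q V + c * ∑ x, q x := by
  rcases (Finset.sum_nonneg fun x (_ : x ∈ Finset.univ) => hq x).eq_or_lt with hzero | hpos
  · have hq0 (x : X) : q x = 0 :=
      (Finset.sum_eq_zero_iff_of_nonneg fun x _ => hq x).1 hzero.symm x (Finset.mem_univ x)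
    simp [channelInf, shannon, outputLaw, hq0]
  · set t := ∑ x, q x
    have hpmf : IsPmf fun x => q x / t :=
      ⟨fun x => div_nonneg (hq x) hpos.le, by rw [← Finset.sum_div, div_self hpos.ne']⟩
    have hscale : q = fun x => t * (q x / t) := funext fun x => (mul_div_cancel₀ _ hpos.ne').symm
    rw [hscale, channelInf_const_mul t _ hV, channelInf_const_mul t _ hW]
    linarith [mul_le_mul_of_nonneg_left (h _ hpmf) hpos.le]

lemma MoreCapableUpTo.trans {V : X → Y → ℝ} {V' : X → Y' → ℝ} {V'' : X → B → ℝ}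
    (h : MoreCapableUpTo c V V') (h' : MoreCapableUpTo c' V' V'') :
    MoreCapableUpTo (c + c') V V'' := fun q hq => by
  linarith [h q hq, h' q hq]

lemma MoreCapableUpTo.of_comp_equiv (i : A ≃ X) (j : B ≃ Y) (k : B' ≃ Y') {V : X → Y → ℝ}
    {W : X → Y' → ℝ}
    (h : MoreCapableUpTo c (fun a b => V (i a) (j b)) (fun a b => W (i a) (k b))) :
    MoreCapableUpTo c V W := by
  intro q hq
  have hqi : IsPmf fun a => q (i a) := ⟨fun a => hq.1 (i a), (Equiv.sum_comp i q).trans hq.2⟩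
  simpa only [channelInf_comp_equiv] using h _ hqi

lemma MoreCapableUpTo.prod_left {V : X → Y → ℝ} {V' : X → Y' → ℝ}
    (h : MoreCapableUpTo c V V') (hV : ∀ x, ∑ y, V x y = 1) (hV' : ∀ x, ∑ y, V' x y = 1)
    {W : A → B → ℝ} (hW : ∀ a, IsPmf (W a)) :
    MoreCapableUpTo c (prodChannel V W) (prodChannel V' W) := by
  intro q hq
  rw [channelInf_prodChannel q hV fun a => (hW a).2, channelInf_prodChannel q hV' fun a => (hW a).2]
  have hcond (b : B) := h.channelInf_le hV hV' (q := fun x => ∑ a, q (x, a) * W a b) fun x =>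
    Finset.sum_nonneg fun a _ => mul_nonneg (hq.1 _) ((hW a).1 b)
  have hmass : ∑ b, ∑ x, ∑ a, q (x, a) * W a b = 1 := by
    rw [← hq.2, ← sum_outputLaw q fun z => (hW z.2).2]
    simp only [outputLaw, Fintype.sum_prod_type]
  have hsum := Finset.sum_le_sum fun b (_ : b ∈ Finset.univ) => hcond b
  rw [Finset.sum_add_distrib, ← Finset.mul_sum, hmass, mul_one] at hsum
  linarith

lemma MoreCapableUpTo.prod_right {V : X → Y → ℝ} {V' : X → Y' → ℝ}
    (h : MoreCapableUpTo c V V') (hV : ∀ x, ∑ y, V x y = 1) (hV' : ∀ x, ∑ y, V' x y = 1)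
    {W : A → B → ℝ} (hW : ∀ a, IsPmf (W a)) :
    MoreCapableUpTo c (prodChannel W V) (prodChannel W V') := by
  refine .of_comp_equiv (.prodComm X A) (.prodComm Y B) (.prodComm Y' B) ?_
  rw [prodChannel_prodComm, prodChannel_prodComm]
  exact h.prod_left hV hV' hW

lemma MoreCapableUpTo.prod {V : X → Y → ℝ} {V' : X → Y' → ℝ} {W : A → B → ℝ}
    {W' : A → B' → ℝ} (h : MoreCapableUpTo c V V') (h' : MoreCapableUpTo c' W W')
    (hV : ∀ x, ∑ y, V x y = 1) (hV' : ∀ x, IsPmf (V' x)) (hW : ∀ a, IsPmf (W a))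
    (hW' : ∀ a, ∑ b, W' a b = 1) :
    MoreCapableUpTo (c + c') (prodChannel V W) (prodChannel V' W') :=
  (h.prod_left hV (fun x => (hV' x).2) hW).trans
    (h'.prod_right (fun a => (hW a).2) hW' hV')

lemma MoreCapableUpTo.pi {n : ℕ} {c : Fin n → ℝ} {V : Fin n → X → Y → ℝ}
    {W : Fin n → X → Y' → ℝ} (h : ∀ j, MoreCapableUpTo (c j) (V j) (W j))
    (hV : ∀ j x, IsPmf (V j x)) (hW : ∀ j x, IsPmf (W j x)) :
    MoreCapableUpTo (∑ j, c j) (piChannel V) (piChannel W) := by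
  induction n with
  | zero =>
    intro q _
    simp [channelInf, shannon, outputLaw, piChannel]
  | succ n ih =>
    have htail := ih (fun j => h j.succ) (fun j => hV j.succ) fun j => hW j.succ
    have hprod := (h 0).prod htail (fun x => (hV 0 x).2) (hW 0)
      (fun x => .pi fun j => hV j.succ (x j))
      fun x => sum_pi_prod_eq_one fun j => (hW j.succ (x j)).2
    refine .of_comp_equiv (Fin.consEquiv fun _ => X) (Fin.consEquiv fun _ => Y)
      (Fin.consEquiv fun _ => Y') ?_
    rw [piChannel_consEquiv, piChannel_consEquiv, Fin.sum_univ_succ]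
    exact hprod

end MoreCapable

section Law

variable {Ω α β : Type} [Fintype Ω]

lemma ent_eq_shannon [Fintype α] (μ : Ω → ℝ) (U : Ω → α) : ent μ U = shannon (prD μ U) := by
  simp only [ent, shannon, Real.negMulLog, neg_mul, Finset.sum_neg_distrib]

lemma sum_prD [Fintype α] (μ : Ω → ℝ) (U : Ω → α) : ∑ a, prD μ U a = ∑ ω, μ ω := by
  simp only [prD]
  rw [Finset.sum_comm]
  simp only [Finset.sum_ite_eq, Finset.mem_univ, if_true]

lemma IsPmf.map [Fintype α] {μ : Ω → ℝ} (hμ : IsPmf μ) (U : Ω → α) : IsPmf (prD μ U) :=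
  ⟨fun _ => Finset.sum_nonneg fun ω _ => ite_nonneg (hμ.1 ω) le_rfl, (sum_prD μ U).trans hμ.2⟩

lemma prD_map [Fintype α] (μ : Ω → ℝ) (F : Ω → α) (U : α → β) :
    prD (prD μ F) U = prD μ fun ω => U (F ω) := by
  ext b
  calc ∑ a, (if U a = b then ∑ ω, if F ω = a then μ ω else 0 else 0)
      = ∑ a, ∑ ω, if F ω = a then if U a = b then μ ω else 0 else 0 := by
        refine Finset.sum_congr rfl fun a _ => ?_
        split_ifs <;> simp
    _ = ∑ ω, if U (F ω) = b then μ ω else 0 := by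
        rw [Finset.sum_comm]
        simp only [Finset.sum_ite_eq, Finset.mem_univ, if_true]

lemma prD_apply_of_injective (μ : Ω → ℝ) {U : Ω → α} (hU : Function.Injective U) (ω : Ω) :
    prD μ U (U ω) = μ ω := by
  simp only [prD, hU.eq_iff, Finset.sum_ite_eq', Finset.mem_univ, if_true]

lemma sum_prD_pair_left [Fintype α] (μ : Ω → ℝ) (U : Ω → α) (T : Ω → β) (t : β) :
    ∑ a, prD μ (fun ω => (U ω, T ω)) (a, t) = prD μ T t := by
  simp only [prD, Prod.mk.injEq, ite_and]
  rw [Finset.sum_comm]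
  simp only [Finset.sum_ite_eq, Finset.mem_univ, if_true]

lemma prD_pi {n : ℕ} (p : Fin n → Ω → ℝ) (U : Ω → α) (a : Fin n → α) :
    prD (fun t : Fin n → Ω => ∏ j, p j (t j)) (fun t j => U (t j)) a =
      ∏ j, prD (p j) U (a j) := by
  simp only [prD]
  rw [Fintype.prod_sum]
  simp only [Finset.prod_ite_zero, funext_iff, Finset.mem_univ, true_imp_iff]

end Law

section Information

variable {Ω α β γ : Type} [Fintype Ω] [Fintype α] [Fintype β] [Fintype γ]

lemma ent_pi (n : ℕ) {μ : Ω → ℝ} (hμ : ∑ ω, μ ω = 1) (U : Ω → α) :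
    ent (fun t : Fin n → Ω => ∏ j, μ (t j)) (fun t j => U (t j)) = n * ent μ U := by
  rw [ent_eq_shannon, ent_eq_shannon, funext (prD_pi (fun _ => μ) U),
    shannon_pi fun _ => (sum_prD μ U).trans hμ]
  simp only [Finset.sum_const, Finset.card_univ, Fintype.card_fin, nsmul_eq_mul]

lemma ent_comp_equiv (μ : Ω → ℝ) (U : Ω → α) (e : α ≃ β) :
    ent μ (fun ω => e (U ω)) = ent μ U := by
  rw [ent_eq_shannon, ent_eq_shannon, ← shannon_comp_equiv e]
  unfold prD
  simp only [e.apply_eq_iff_eq]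

lemma mutInf_pi (n : ℕ) {μ : Ω → ℝ} (hμ : ∑ ω, μ ω = 1) (U : Ω → α) (T : Ω → β) :
    mutInf (fun t : Fin n → Ω => ∏ j, μ (t j)) (fun t j => U (t j)) (fun t j => T (t j)) =
      n * mutInf μ U T := by
  have hpair : ent (fun t : Fin n → Ω => ∏ j, μ (t j))
      (fun t : Fin n → Ω => (fun j => U (t j), fun j => T (t j))) =
        n * ent μ fun ω => (U ω, T ω) := by
    rw [← ent_pi n hμ]
    exact ent_comp_equiv _ (fun (t : Fin n → Ω) j => (U (t j), T (t j)))
      (Equiv.arrowProdEquivProdArrow (Fin n) (fun _ => α) fun _ => β)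
  rw [mutInf, mutInf, ent_pi n hμ, ent_pi n hμ, hpair]
  ring

lemma mutInf_map (μ : Ω → ℝ) (F : Ω → α) (U : α → β) (T : α → γ) :
    mutInf (prD μ F) U T = mutInf μ (fun ω => U (F ω)) fun ω => T (F ω) := by
  simp only [mutInf, ent_eq_shannon, prD_map]

lemma condMutInf_map {δ : Type} [Fintype δ] (μ : Ω → ℝ) (F : Ω → α) (U : α → β) (T : α → γ)
    (R : α → δ) :
    condMutInf (prD μ F) U T R =
      condMutInf μ (fun ω => U (F ω)) (fun ω => T (F ω)) fun ω => R (F ω) := by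
  simp only [condMutInf, condEnt, ent_eq_shannon, prD_map]

lemma condMutInf_eq_sum_channelInf (μ : Ω → ℝ) (U : Ω → α) (T : Ω → β) (R : Ω → γ)
    {V : γ → α → β → ℝ} (hV : ∀ r u, ∑ t, V r u t = 1)
    (hlaw : ∀ u t r, prD μ (fun ω => (U ω, T ω, R ω)) (u, t, r) =
      prD μ (fun ω => (U ω, R ω)) (u, r) * V r u t) :
    condMutInf μ U T R = ∑ r, channelInf (fun u => prD μ (fun ω => (U ω, R ω)) (u, r)) (V r) := by
  have htriple : ent μ (fun ω => (U ω, T ω, R ω)) = ent μ (fun ω => (U ω, R ω)) +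
      ∑ r, ∑ u, prD μ (fun ω => (U ω, R ω)) (u, r) * shannon (V r u) := by
    simp only [ent_eq_shannon]
    rw [shannon_prod_type, shannon_prod_type, Finset.sum_comm, ← Finset.sum_add_distrib]
    refine Finset.sum_congr rfl fun u _ => ?_
    rw [shannon_prod_type_right]
    simp only [hlaw, shannon_const_mul, hV, one_mul, Finset.sum_add_distrib]
    rfl
  have houtput : ent μ (fun ω => (T ω, R ω)) =
      ∑ r, shannon (outputLaw (fun u => prD μ (fun ω => (U ω, R ω)) (u, r)) (V r)) := by
    rw [ent_eq_shannon, shannon_prod_type_right]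
    refine Finset.sum_congr rfl fun r _ => congrArg shannon (funext fun t => ?_)
    rw [← sum_prD_pair_left μ U fun ω => (T ω, R ω)]
    simp only [hlaw, outputLaw]
  have hside : ent μ R = ∑ r, Real.negMulLog (∑ u, prD μ (fun ω => (U ω, R ω)) (u, r)) := by
    simp only [ent_eq_shannon, shannon, sum_prD_pair_left]
  simp only [condMutInf, condEnt, channelInf, htriple, houtput, hside, Finset.sum_sub_distrib]
  ring

end Information

section ChannelJoint

variable {Ω Θ X Y Y' Z : Type} [Fintype Ω] [Fintype Θ]

lemma prD_channelJoint_fst (P : Ω → ℝ) {K : Ω → Θ → ℝ} (hK : ∀ ω, ∑ θ, K ω θ = 1) :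
    prD (channelJoint P K) Prod.fst = P := by
  ext ω
  simp only [prD, channelJoint]
  rw [Fintype.sum_prod_type_right]
  simp only [Finset.sum_ite_eq', Finset.mem_univ, if_true, ← Finset.mul_sum, hK, mul_one]

lemma prD_channelJoint_comp_fst {α : Type} (P : Ω → ℝ) {K : Ω → Θ → ℝ}
    (hK : ∀ ω, ∑ θ, K ω θ = 1) (U : Ω → α) :
    prD (channelJoint P K) (fun ω => U ω.1) = prD P U := by
  rw [← prD_map _ Prod.fst, prD_channelJoint_fst P hK]

lemma prD_channelJoint_output (P : Ω → ℝ) (K : X → Z → Θ → ℝ) (f : Ω → X)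
    (g : Ω → Z) (π : Θ → Y) (x : X) (y : Y) (z : Z) :
    prD (channelJoint P fun ω => K (f ω) (g ω)) (fun ω => (f ω.1, π ω.2, g ω.1)) (x, y, z) =
      prD P (fun ω => (f ω, g ω)) (x, z) * prD (K x z) π y := by
  simp only [prD, channelJoint]
  rw [Fintype.sum_prod_type, Finset.sum_mul_sum]
  refine Finset.sum_congr rfl fun ω _ => Finset.sum_congr rfl fun θ _ => ?_
  by_cases hx : f ω = x
  · by_cases hz : g ω = z
    · subst hx hz
      simp
    · simp [hz]
  · simp [hx]

variable [Fintype X] [Fintype Y] [Fintype Y'] [Fintype Z]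

lemma condMutInf_channelJoint (P : Ω → ℝ) {K : X → Z → Θ → ℝ} (hK : ∀ x z, ∑ θ, K x z θ = 1)
    (f : Ω → X) (g : Ω → Z) (π : Θ → Y) :
    condMutInf (channelJoint P fun ω => K (f ω) (g ω)) (fun ω => f ω.1) (fun ω => π ω.2)
        (fun ω => g ω.1) =
      ∑ z, channelInf (fun x => prD P (fun ω => (f ω, g ω)) (x, z))
        fun x => prD (K x z) π := by
  have hinput := prD_channelJoint_comp_fst P (fun ω => hK (f ω) (g ω)) fun ω => (f ω, g ω)
  rw [condMutInf_eq_sum_channelInf _ _ _ _ (V := fun z x => prD (K x z) π)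
    (fun z x => (sum_prD _ π).trans (hK x z)), hinput]
  intro x y z
  rw [prD_channelJoint_output, hinput]

lemma condMutInf_channelJoint_le {P : Ω → ℝ} (hP : IsPmf P) {K : X → Z → Θ → ℝ}
    (hK : ∀ x z, ∑ θ, K x z θ = 1) (f : Ω → X) (g : Ω → Z) {π : Θ → Y} {π' : Θ → Y'} {c : ℝ}
    (h : ∀ z, MoreCapableUpTo c (fun x => prD (K x z) π) fun x => prD (K x z) π') :
    condMutInf (channelJoint P fun ω => K (f ω) (g ω)) (fun ω => f ω.1) (fun ω => π' ω.2)
        (fun ω => g ω.1) ≤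
      condMutInf (channelJoint P fun ω => K (f ω) (g ω)) (fun ω => f ω.1) (fun ω => π ω.2)
        (fun ω => g ω.1) + c := by
  have hinput := hP.map fun ω => (f ω, g ω)
  have hmass : ∑ z, ∑ x, prD P (fun ω => (f ω, g ω)) (x, z) = 1 := by
    rw [← Fintype.sum_prod_type_right, hinput.2]
  rw [condMutInf_channelJoint P hK, condMutInf_channelJoint P hK]
  calc ∑ z, channelInf (fun x => prD P (fun ω => (f ω, g ω)) (x, z)) (fun x => prD (K x z) π')
      ≤ ∑ z, (channelInf (fun x => prD P (fun ω => (f ω, g ω)) (x, z)) (fun x => prD (K x z) π) +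
          c * ∑ x, prD P (fun ω => (f ω, g ω)) (x, z)) :=
        Finset.sum_le_sum fun z _ => (h z).channelInf_le (fun x => (sum_prD _ π).trans (hK x z))
          (fun x => (sum_prD _ π').trans (hK x z)) fun x => hinput.1 (x, z)
    _ = _ := by rw [Finset.sum_add_distrib, ← Finset.mul_sum, hmass, mul_one]

end ChannelJoint

section CodedMeasure

variable {S Θ X Z : Type} [Fintype S] [Fintype Θ] {n : ℕ} {K : X → Z → Θ → ℝ}

lemma mutInf_codedMeasure {α β : Type} [Fintype α] [Fintype β] (P : S → ℝ)
    (hK : ∀ x z, ∑ θ, K x z θ = 1) (f : S → Fin n → X) (g : S → Fin n → Z)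
    (U : S → α) (T : S → β) :
    mutInf (codedMeasure P K f g) (fun ω => U ω.1) (fun ω => T ω.1) = mutInf P U T := by
  rw [← mutInf_map _ Prod.fst, codedMeasure,
    prD_channelJoint_fst P fun s => sum_pi_prod_eq_one fun j => hK (f s j) (g s j)]

lemma condMutInf_codedMeasure_le {Y Y' : Type} [Fintype X] [Fintype Z] [Fintype Y] [Fintype Y']
    {P : S → ℝ} (hP : IsPmf P) (hK : ∀ x z, IsPmf (K x z)) {π : Θ → Y} {π' : Θ → Y'} {c : ℝ}
    (h : ∀ z, MoreCapableUpTo c (fun x => prD (K x z) π) fun x => prD (K x z) π')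
    (f : S → Fin n → X) (g : S → Fin n → Z) :
    condMutInf (codedMeasure P K f g) (fun ω => f ω.1) (fun ω j => π' (ω.2 j))
        (fun ω => g ω.1) ≤
      condMutInf (codedMeasure P K f g) (fun ω => f ω.1) (fun ω j => π (ω.2 j))
        (fun ω => g ω.1) + n * c := by
  have houtput {B : Type} (ρ : Θ → B) (z : Fin n → Z) :
      (fun x : Fin n → X =>
          prD (fun θ : Fin n → Θ => ∏ j, K (x j) (z j) (θ j)) fun θ j => ρ (θ j)) =
        piChannel fun j x => prD (K x (z j)) ρ :=
    funext₂ fun x => prD_pi (fun j => K (x j) (z j)) ρ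
  have hblock (x : Fin n → X) (z : Fin n → Z) :
      ∑ θ : Fin n → Θ, ∏ j, K (x j) (z j) (θ j) = 1 :=
    sum_pi_prod_eq_one fun j => (hK (x j) (z j)).2
  refine condMutInf_channelJoint_le hP hblock f g (π := fun θ j => π (θ j))
    (π' := fun θ j => π' (θ j)) fun z => ?_
  rw [houtput, houtput]
  have hpi := MoreCapableUpTo.pi (fun j => h (z j)) (fun j x => (hK x (z j)).map π)
    fun j x => (hK x (z j)).map π'
  rwa [Finset.sum_const, Finset.card_univ, Fintype.card_fin, nsmul_eq_mul] at hpi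

end CodedMeasure

section SingleLetter

variable {S1 S2 W1 W2 X1 X2 Y1 Y2 Y : Type} [Fintype S1] [Fintype S2] [Fintype W1] [Fintype W2]
  [Fintype X1] [Fintype X2] [Fintype Y1] [Fintype Y2] {pS : S1 × S2 × W1 × W2 → ℝ}

lemma prD_sciMeasure_const (hpS : ∑ r, pS r = 1) (q1 : X1 → ℝ) (q2 : X2 → ℝ)
    (chan : X1 → X2 → Y1 × Y2 → ℝ) :
    prD (sciMeasure pS (fun _ => q1) (fun _ => q2) chan) (fun z => ((z.2.1, z.2.2.1), z.2.2.2)) =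
      channelJoint (fun x => q1 x.1 * q2 x.2) fun x => chan x.1 x.2 := by
  ext ⟨x, y⟩
  have hfactor (r : S1 × S2 × W1 × W2) (v : X1 × X2 × Y1 × Y2) :
      sciMeasure pS (fun _ => q1) (fun _ => q2) chan (r, v) =
        pS r * (q1 v.1 * q2 v.2.1 * chan v.1 v.2.1 v.2.2) := by
    simp only [sciMeasure]
    ring
  rw [prD, Fintype.sum_prod_type_right, ← Equiv.sum_comp (Equiv.prodAssoc X1 X2 (Y1 × Y2))]
  simp [hfactor, ← Finset.sum_mul, hpS, channelJoint]

lemma condMutInf_sciMeasure_const {A B C : Type} [Fintype A] [Fintype B] [Fintype C]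
    (hpS : ∑ r, pS r = 1) (q1 : X1 → ℝ) (q2 : X2 → ℝ) (chan : X1 → X2 → Y1 × Y2 → ℝ)
    (U : X1 × X2 → A) (π : Y1 × Y2 → B) (R : X1 × X2 → C) :
    condMutInf (sciMeasure pS (fun _ => q1) (fun _ => q2) chan)
        (fun z => U (z.2.1, z.2.2.1)) (fun z => π z.2.2.2) (fun z => R (z.2.1, z.2.2.1)) =
      condMutInf (channelJoint (fun x => q1 x.1 * q2 x.2) fun x => chan x.1 x.2)
        (fun ω => U ω.1) (fun ω => π ω.2) (fun ω => R ω.1) := by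
  rw [← prD_sciMeasure_const hpS, condMutInf_map]

variable {chan : X1 → X2 → Y1 × Y2 → ℝ} [Fintype Y]

lemma condMutInf_sciMeasure_single_right (hpS : ∑ r, pS r = 1)
    (hchan : ∀ x1 x2, ∑ y, chan x1 x2 y = 1) (q : X1 → ℝ) (x2 : X2) (π : Y1 × Y2 → Y) :
    condMutInf (sciMeasure pS (fun _ => q) (fun _ => Pi.single x2 1) chan)
        (fun z => z.2.1) (fun z => π z.2.2.2) (fun z => z.2.2.1) =
      channelInf q fun x1 => prD (chan x1 x2) π := by
  have hinput (x z) := prD_apply_of_injective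
    (fun x : X1 × X2 => q x.1 * (Pi.single x2 1 : X2 → ℝ) x.2) Function.injective_id (x, z)
  rw [condMutInf_sciMeasure_const hpS q _ chan Prod.fst π Prod.snd,
    condMutInf_channelJoint _ hchan Prod.fst Prod.snd]
  calc _ = ∑ z, (Pi.single x2 1 : X2 → ℝ) z * channelInf q fun x1 => prD (chan x1 z) π := by
        refine Finset.sum_congr rfl fun z _ => ?_
        rw [← channelInf_const_mul _ _ fun x => (sum_prD _ π).trans (hchan x z)]
        simp only [← mul_comm (q _)]
        exact congrArg (channelInf · _) (funext fun x => hinput x z)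
    _ = _ := by simp only [Pi.single_apply, ite_mul, one_mul, zero_mul, Finset.sum_ite_eq',
        Finset.mem_univ, if_true]

lemma condMutInf_sciMeasure_single_left (hpS : ∑ r, pS r = 1)
    (hchan : ∀ x1 x2, ∑ y, chan x1 x2 y = 1) (q : X2 → ℝ) (x1 : X1) (π : Y1 × Y2 → Y) :
    condMutInf (sciMeasure pS (fun _ => Pi.single x1 1) (fun _ => q) chan)
        (fun z => z.2.2.1) (fun z => π z.2.2.2) (fun z => z.2.1) =
      channelInf q fun x2 => prD (chan x1 x2) π := by
  have hinput (x z) := prD_apply_of_injective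
    (fun x : X1 × X2 => (Pi.single x1 1 : X1 → ℝ) x.1 * q x.2) Prod.swap_injective (z, x)
  rw [condMutInf_sciMeasure_const hpS _ q chan Prod.snd π Prod.fst,
    condMutInf_channelJoint _ (fun x z => hchan z x) Prod.snd Prod.fst]
  calc _ = ∑ z, (Pi.single x1 1 : X1 → ℝ) z * channelInf q fun x2 => prD (chan z x2) π := by
        refine Finset.sum_congr rfl fun z _ => ?_
        rw [← channelInf_const_mul _ _ fun x => (sum_prD _ π).trans (hchan z x)]
        exact congrArg (channelInf · _) (funext fun x => hinput x z)
    _ = _ := by simp only [Pi.single_apply, ite_mul, one_mul, zero_mul, Finset.sum_ite_eq',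
        Finset.mem_univ, if_true]

end SingleLetter

theorem strong_source_channel_interference_block_general
    {S1 S2 W1 W2 X1 X2 Y1 Y2 : Type}
    [Fintype S1] [Fintype S2] [Fintype W1] [Fintype W2]
    [Fintype X1] [Fintype X2] [Fintype Y1] [Fintype Y2]
    (pS : S1 × S2 × W1 × W2 → ℝ) (hpS : IsPmf pS)
    (chan : X1 → X2 → Y1 × Y2 → ℝ) (hchan : ∀ x1 x2, IsPmf (chan x1 x2))
    (b : ℝ)
    (hSCI : ∀ (q1 : X1 → ℝ) (q2 : X2 → ℝ), IsPmf q1 → IsPmf q2 →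
      (b * condMutInf (sciMeasure pS (fun _ => q1) (fun _ => q2) chan)
          (fun z => z.2.1) (fun z => z.2.2.2.1) (fun z => z.2.2.1) ≤
        b * condMutInf (sciMeasure pS (fun _ => q1) (fun _ => q2) chan)
          (fun z => z.2.1) (fun z => z.2.2.2.2) (fun z => z.2.2.1) +
        mutInf pS (fun r => r.1) (fun r => r.2.2.2)) ∧
      (b * condMutInf (sciMeasure pS (fun _ => q1) (fun _ => q2) chan)
          (fun z => z.2.2.1) (fun z => z.2.2.2.2) (fun z => z.2.1) ≤
        b * condMutInf (sciMeasure pS (fun _ => q1) (fun _ => q2) chan)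
          (fun z => z.2.2.1) (fun z => z.2.2.2.1) (fun z => z.2.1) +
        mutInf pS (fun r => r.2.1) (fun r => r.2.2.1)))
    {m n : ℕ} (hn : 0 < n) (hnm : (n : ℝ) = b * m)
    (f1 : (Fin m → S1 × S2 × W1 × W2) → Fin n → X1)
    (f2 : (Fin m → S1 × S2 × W1 × W2) → Fin n → X2) :
    (condMutInf (codedMeasure (fun s => ∏ i, pS (s i)) chan f1 f2)
        (fun ω => f2 ω.1) (fun ω j => (ω.2 j).2) (fun ω => f1 ω.1) ≤
      condMutInf (codedMeasure (fun s => ∏ i, pS (s i)) chan f1 f2)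
        (fun ω => f2 ω.1) (fun ω j => (ω.2 j).1) (fun ω => f1 ω.1) +
      mutInf (codedMeasure (fun s => ∏ i, pS (s i)) chan f1 f2)
        (fun ω i => (ω.1 i).2.1) (fun ω i => (ω.1 i).2.2.1)) ∧
    (condMutInf (codedMeasure (fun s => ∏ i, pS (s i)) chan f1 f2)
        (fun ω => f1 ω.1) (fun ω j => (ω.2 j).1) (fun ω => f2 ω.1) ≤
      condMutInf (codedMeasure (fun s => ∏ i, pS (s i)) chan f1 f2)
        (fun ω => f1 ω.1) (fun ω j => (ω.2 j).2) (fun ω => f2 ω.1) +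
      mutInf (codedMeasure (fun s => ∏ i, pS (s i)) chan f1 f2)
        (fun ω i => (ω.1 i).1) (fun ω i => (ω.1 i).2.2.2)) := by
  have hb : 0 < b := pos_of_mul_pos_left (hnm ▸ Nat.cast_pos.2 hn) m.cast_nonneg
  have hrate (I : ℝ) : m * I = n * (I / b) := by
    rw [hnm]
    field_simp
  have hP : IsPmf fun s : Fin m → S1 × S2 × W1 × W2 => ∏ i, pS (s i) := .pi fun _ => hpS
  have hsum (x1 : X1) (x2 : X2) : ∑ y, chan x1 x2 y = 1 := (hchan x1 x2).2
  constructor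
  · rw [mutInf_codedMeasure _ hsum f1 f2 (fun s i => (s i).2.1)
      fun s i => (s i).2.2.1, mutInf_pi m hpS.2 (fun r => r.2.1) fun r => r.2.2.1, hrate]
    refine condMutInf_codedMeasure_le (K := fun x2 x1 => chan x1 x2) hP (fun _ _ => hchan _ _)
      (π := Prod.fst) (π' := Prod.snd) (fun x1 q hq => ?_) f2 f1
    have key := (hSCI (Pi.single x1 1) q (isPmf_single x1) hq).2
    rw [condMutInf_sciMeasure_single_left hpS.2 hsum q x1 Prod.fst,
      condMutInf_sciMeasure_single_left hpS.2 hsum q x1 Prod.snd] at key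
    rw [← sub_le_iff_le_add', le_div_iff₀ hb]
    linarith
  · rw [mutInf_codedMeasure _ hsum f1 f2 (fun s i => (s i).1)
      fun s i => (s i).2.2.2, mutInf_pi m hpS.2 (fun r => r.1) fun r => r.2.2.2, hrate]
    refine condMutInf_codedMeasure_le hP hchan
      (π := Prod.snd) (π' := Prod.fst) (fun x2 q hq => ?_) f1 f2
    have key := (hSCI q (Pi.single x2 1) hq (isPmf_single x2)).1
    rw [condMutInf_sciMeasure_single_right hpS.2 hsum q x2 Prod.fst,
      condMutInf_sciMeasure_single_right hpS.2 hsum q x2 Prod.snd] at key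
    rw [← sub_le_iff_le_add', le_div_iff₀ hb]
    linarith

/-- If the i.i.d. source/side-information process satisfies that
`(S1, W2)` is independent of `(S2, W1)`, and the strong source-channel interference
conditions hold for rate `b`, i.e. for every single-letter distribution of the form
`p(w1,w2,s1,s2)p(x1|s1)p(x2|s2)`:
`b·I(X1;Y1|X2) ≤ b·I(X1;Y2|X2) + I(S1;W2)` and
`b·I(X2;Y2|X1) ≤ b·I(X2;Y1|X1) + I(S2;W1)`,
then for all block lengths `m, n` with `n/m = b` and all deterministic encoders
`X1^n = f1(S1^m)`, `X2^n = f2(S2^m)`: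
`I(X2^n;Y2^n|X1^n) ≤ I(X2^n;Y1^n|X1^n) + I(S2^m;W1^m)` and
`I(X1^n;Y1^n|X2^n) ≤ I(X1^n;Y2^n|X2^n) + I(S1^m;W2^m)`. -/
theorem strong_source_channel_interference_block
    {S1 S2 W1 W2 X1 X2 Y1 Y2 : Type}
    [Fintype S1] [Fintype S2] [Fintype W1] [Fintype W2]
    [Fintype X1] [Fintype X2] [Fintype Y1] [Fintype Y2]
    (pS : S1 × S2 × W1 × W2 → ℝ) (hpS : IsPmf pS)
    (hInd : ∀ (a : S1 × W2) (c : S2 × W1),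
      prD pS (fun r => ((r.1, r.2.2.2), (r.2.1, r.2.2.1))) (a, c) =
        prD pS (fun r => (r.1, r.2.2.2)) a * prD pS (fun r => (r.2.1, r.2.2.1)) c)
    (chan : X1 → X2 → Y1 × Y2 → ℝ) (hchan : ∀ x1 x2, IsPmf (chan x1 x2))
    (b : ℝ)
    (hSCI : ∀ (k1 : S1 → X1 → ℝ) (k2 : S2 → X2 → ℝ),
      (∀ s1, IsPmf (k1 s1)) → (∀ s2, IsPmf (k2 s2)) →
      (b * condMutInf (sciMeasure pS k1 k2 chan)
          (fun z => z.2.1) (fun z => z.2.2.2.1) (fun z => z.2.2.1) ≤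
        b * condMutInf (sciMeasure pS k1 k2 chan)
          (fun z => z.2.1) (fun z => z.2.2.2.2) (fun z => z.2.2.1) +
        mutInf pS (fun r => r.1) (fun r => r.2.2.2)) ∧
      (b * condMutInf (sciMeasure pS k1 k2 chan)
          (fun z => z.2.2.1) (fun z => z.2.2.2.2) (fun z => z.2.1) ≤
        b * condMutInf (sciMeasure pS k1 k2 chan)
          (fun z => z.2.2.1) (fun z => z.2.2.2.1) (fun z => z.2.1) +
        mutInf pS (fun r => r.2.1) (fun r => r.2.2.1))) :
    ∀ (m n : ℕ), 0 < m → 0 < n → (n : ℝ) = b * m →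
    ∀ (f1 : (Fin m → S1) → Fin n → X1) (f2 : (Fin m → S2) → Fin n → X2),
      (condMutInf (icBlockMeasure pS chan m n f1 f2)
          (fun ω => f2 (fun i => (ω.1 i).2.1)) (fun ω => fun j => (ω.2 j).2)
          (fun ω => f1 (fun i => (ω.1 i).1)) ≤
        condMutInf (icBlockMeasure pS chan m n f1 f2)
          (fun ω => f2 (fun i => (ω.1 i).2.1)) (fun ω => fun j => (ω.2 j).1)
          (fun ω => f1 (fun i => (ω.1 i).1)) +
        mutInf (icBlockMeasure pS chan m n f1 f2)
          (fun ω => fun i => (ω.1 i).2.1) (fun ω => fun i => (ω.1 i).2.2.1)) ∧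
      (condMutInf (icBlockMeasure pS chan m n f1 f2)
          (fun ω => f1 (fun i => (ω.1 i).1)) (fun ω => fun j => (ω.2 j).1)
          (fun ω => f2 (fun i => (ω.1 i).2.1)) ≤
        condMutInf (icBlockMeasure pS chan m n f1 f2)
          (fun ω => f1 (fun i => (ω.1 i).1)) (fun ω => fun j => (ω.2 j).2)
          (fun ω => f2 (fun i => (ω.1 i).2.1)) +
        mutInf (icBlockMeasure pS chan m n f1 f2)
          (fun ω => fun i => (ω.1 i).1) (fun ω => fun i => (ω.1 i).2.2.2)) := by
  intro m n _ hn hnm f1 f2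
  exact strong_source_channel_interference_block_general pS hpS chan hchan b
    (fun q1 q2 hq1 hq2 => hSCI _ _ (fun _ => hq1) fun _ => hq2) hn hnm
    (fun s => f1 fun i => (s i).1) fun s => f2 fun i => (s i).2.1
end
end

section
/- In lossless transmission of arbitrarily correlated sources (S1, S2) over a DM two-way channel p(y1,y2|x1,x2), source-channel rate b = 1 is achievable (even using restricted encoders, whose channel inputs depend only on the user's own source) if H(S1|S2) < I(X1;Y2|X2,S2,Q) and H(S2|S1) < I(X2;Y1|X1,S1,Q) for some joint distribution of the form p(q,s1,s2,x1,x2,y1,y2) = p(q)·p(s1,s2)·p(x1|q,s1)·p(x2|q,s2)·p(y1,y2|x1,x2), where p(s1,s2) is the given source pmf and p(y1,y2|x1,x2) the given channel law. -/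
open scoped BigOperators Classical

noncomputable section

/-- Average error probability for the two-way channel with restricted encoders:
user `i` sends `X_i^n = f_i(S_i^m)` (no dependence on past channel outputs), and
user `i` decodes the other user's source block from its own source block and its
received channel outputs. -/
def twErrRestricted {S1 S2 X1 X2 Y1 Y2 : Type} [Fintype S1] [Fintype S2]
    [Fintype X1] [Fintype X2] [Fintype Y1] [Fintype Y2]
    (pS : S1 × S2 → ℝ) (chan : X1 → X2 → Y1 × Y2 → ℝ) (m n : ℕ)
    (f1 : (Fin m → S1) → Fin n → X1) (f2 : (Fin m → S2) → Fin n → X2)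
    (g1 : (Fin m → S1) → (Fin n → Y1) → Fin m → S2)
    (g2 : (Fin m → S2) → (Fin n → Y2) → Fin m → S1) : ℝ :=
  ∑ sb : Fin m → S1 × S2, ∑ yb : Fin n → Y1 × Y2,
    ((∏ i, pS (sb i)) *
      ∏ j, chan (f1 (fun i => (sb i).1) j) (f2 (fun i => (sb i).2) j) (yb j)) *
    (if g1 (fun i => (sb i).1) (fun j => (yb j).1) = (fun i => (sb i).2)
        ∧ g2 (fun i => (sb i).2) (fun j => (yb j).2) = (fun i => (sb i).1)
      then 0 else 1)

/-- Source-channel rate `b` is achievable over the two-way channel with restricted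
encoders. -/
def twAchievableRestricted {S1 S2 X1 X2 Y1 Y2 : Type} [Fintype S1] [Fintype S2]
    [Fintype X1] [Fintype X2] [Fintype Y1] [Fintype Y2]
    (pS : S1 × S2 → ℝ) (chan : X1 → X2 → Y1 × Y2 → ℝ) (b : ℝ) : Prop :=
  ∀ ε : ℝ, 0 < ε → ∃ m n : ℕ, 0 < m ∧ 0 < n ∧ (n : ℝ) = b * m ∧
    ∃ (f1 : (Fin m → S1) → Fin n → X1) (f2 : (Fin m → S2) → Fin n → X2)
      (g1 : (Fin m → S1) → (Fin n → Y1) → Fin m → S2)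
      (g2 : (Fin m → S2) → (Fin n → Y2) → Fin m → S1),
      twErrRestricted pS chan m n f1 f2 g1 g2 < ε

/-- The joint single-letter distribution
`p(q,s1,s2,x1,x2,y1,y2) = p(q) p(s1,s2) p(x1|q,s1) p(x2|q,s2) p(y1,y2|x1,x2)`. -/
def twJointMeasure {S1 S2 X1 X2 Y1 Y2 : Type} (nq : ℕ) (pq : Fin nq → ℝ)
    (pS : S1 × S2 → ℝ) (px1 : Fin nq → S1 → X1 → ℝ) (px2 : Fin nq → S2 → X2 → ℝ)
    (chan : X1 → X2 → Y1 × Y2 → ℝ) :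
    Fin nq × (S1 × S2) × X1 × X2 × (Y1 × Y2) → ℝ :=
  fun z => pq z.1 * pS z.2.1 * px1 z.1 z.2.1.1 z.2.2.1 * px2 z.1 z.2.1.2 z.2.2.2.1 *
    chan z.2.2.1 z.2.2.2.1 z.2.2.2.2

/-!
Each user draws its codewords at random, letter by letter from `p(x | q, s)` for a fixed
time-sharing sequence `q`, and decodes by maximum a posteriori probability. The source symbols are
averaged over together with the noise, so a decoding error at user 2 costs at most the score
`p(s1, s2) p(y2 | x1, x2)` of the true symbol, and also at most the total score of its competitors,
whose mean over the random code is at most `D = ∑ t, p(t, s2) p(y2 | q, t, x2)`. Bounding the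
minimum of the two by `score ^ (1 - ρ) * D ^ ρ`, with `ρ ∈ [0, 1]`, gives a product over the
letters of the block, so the error of user 2, averaged also over `q`, is at most `r(ρ) ^ n` with
`r(ρ) = E[(score / D) ^ (-ρ)]` a single-letter expectation. Here `r(0) = 1` and
`dr/dρ(0) = -E[log (score / D)] = H(S1 | S2) - I(X1; Y2 | X2, S2, Q) < 0`, so `r(ρ) < 1` for small
`ρ > 0`. By symmetry the error of user 1 decays exponentially as well, and since the two averages
add up, a single code serves both users.
-/

/-- The expectation of `F` under the weights `p` on a finite type. -/
def mean {α : Type} [Fintype α] (p F : α → ℝ) : ℝ :=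
  ∑ a, p a * F a

section Mean

variable {α β ι : Type} [Fintype α] [Fintype β] {p F G : α → ℝ}

lemma IsPmf.mean_const (hp : IsPmf p) (c : ℝ) : mean p (fun _ => c) = c := by
  simp [mean, ← Finset.sum_mul, hp.2]

lemma mean_add : mean p (fun a => F a + G a) = mean p F + mean p G := by
  simp only [mean, mul_add, Finset.sum_add_distrib]

lemma mean_const_mul (c : ℝ) (F : α → ℝ) : mean p (fun a => c * F a) = c * mean p F := by
  simp only [mean, Finset.mul_sum, mul_left_comm]

lemma mean_sum (s : Finset ι) (F : ι → α → ℝ) :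
    mean p (fun a => ∑ i ∈ s, F i a) = ∑ i ∈ s, mean p (F i) := by
  simp only [mean, Finset.mul_sum]
  exact Finset.sum_comm

lemma mean_comm (p : α → ℝ) (q : β → ℝ) (F : α → β → ℝ) :
    mean p (fun a => mean q (F a)) = mean q fun b => mean p fun a => F a b := by
  simp only [mean, Finset.mul_sum, mul_left_comm (p _)]
  exact Finset.sum_comm

lemma mean_congr (h : ∀ a, p a ≠ 0 → F a = G a) : mean p F = mean p G :=
  Finset.sum_congr rfl fun a _ => mul_eq_mul_left_iff.2 (or_iff_not_imp_right.2 (h a))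

lemma mean_mono (hp : ∀ a, 0 ≤ p a) (h : ∀ a, F a ≤ G a) : mean p F ≤ mean p G :=
  Finset.sum_le_sum fun a _ => mul_le_mul_of_nonneg_left (h a) (hp a)

lemma mean_nonneg (hp : ∀ a, 0 ≤ p a) (hF : ∀ a, 0 ≤ F a) : 0 ≤ mean p F :=
  Finset.sum_nonneg fun a _ => mul_nonneg (hp a) (hF a)

lemma IsPmf.mean_min_le (hp : IsPmf p) (c : ℝ) (F : α → ℝ) :
    mean p (fun a => min c (F a)) ≤ min c (mean p F) :=
  le_min ((mean_mono hp.1 fun _ => min_le_left _ _).trans_eq (hp.mean_const c))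
    (mean_mono hp.1 fun _ => min_le_right _ _)

lemma mean_comp_equiv (e : α ≃ β) (p F : β → ℝ) : mean (p ∘ e) (F ∘ e) = mean p F :=
  e.sum_comp fun b => p b * F b

lemma IsPmf.comp_equiv {p : β → ℝ} (hp : IsPmf p) (e : α ≃ β) : IsPmf (p ∘ e) :=
  ⟨fun a => hp.1 (e a), (e.sum_comp p).trans hp.2⟩

lemma IsPmf.nonempty (hp : IsPmf p) : Nonempty α := by
  by_contra h
  rw [not_nonempty_iff] at h
  simpa using hp.2

lemma IsPmf.exists_le_of_mean_le (hp : IsPmf p) {B : ℝ} (h : mean p F ≤ B) : ∃ a, F a ≤ B := by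
  by_contra! hB
  obtain ⟨a, -, ha⟩ : ∃ a ∈ Finset.univ, p a ≠ 0 :=
    Finset.exists_ne_zero_of_sum_ne_zero (hp.2.trans_ne one_ne_zero)
  refine h.not_gt ((hp.mean_const B).symm.trans_lt ?_)
  exact Finset.sum_lt_sum (fun b _ => mul_le_mul_of_nonneg_left (hB b).le (hp.1 b))
    ⟨a, Finset.mem_univ a, mul_lt_mul_of_pos_left (hB a) ((hp.1 a).lt_of_ne' ha)⟩

-- At `ρ = 0` the exponential moment is `1` and its derivative is `-mean p F`.
lemma eventually_mean_exp_neg_mul_lt_one (hp : ∑ a, p a = 1) (hF : 0 < mean p F) :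
    ∀ᶠ ρ in nhdsWithin (0 : ℝ) (Set.Ioi 0), mean p (fun a => Real.exp (-ρ * F a)) < 1 := by
  have hderiv : HasDerivAt (fun ρ : ℝ => mean p (fun a => Real.exp (-ρ * F a)) - 1)
      (mean p fun a => Real.exp (-0 * F a) * (-1 * F a)) 0 :=
    (HasDerivAt.fun_sum fun a _ =>
      ((hasDerivAt_id (0 : ℝ)).neg.mul_const (F a)).exp.const_mul (p a)).sub_const 1
  have hneg : deriv (fun ρ : ℝ => mean p (fun a => Real.exp (-ρ * F a)) - 1) 0 < 0 := by
    rw [hderiv.deriv]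
    simpa [mean] using hF
  have hsign := eventually_nhdsWithin_sign_eq_of_deriv_neg hneg (by simp [mean, hp])
  filter_upwards [nhdsWithin_le_nhds hsign, self_mem_nhdsWithin] with ρ hρ hpos
  have hlt : 0 - ρ < 0 := sub_neg.2 hpos
  rw [sign_neg hlt, sign_eq_neg_one_iff, sub_neg] at hρ
  exact hρ

end Mean

lemma min_le_rpow_mul_rpow {a b ρ : ℝ} (ha : 0 ≤ a) (hb : 0 ≤ b) (hρ : ρ ∈ Set.Icc (0 : ℝ) 1) :
    min a b ≤ a ^ (1 - ρ) * b ^ ρ := by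
  have hρ' : 0 ≤ 1 - ρ := sub_nonneg.2 hρ.2
  calc min a b = min a b ^ (1 - ρ) * min a b ^ ρ := by
        rw [← Real.rpow_add_of_nonneg (le_min ha hb) hρ' hρ.1, sub_add_cancel, Real.rpow_one]
    _ ≤ a ^ (1 - ρ) * b ^ ρ := by
        gcongr
        exacts [min_le_left a b, hρ.1, min_le_right a b]

lemma mul_exp_neg_mul_log_sub_log {a b ρ : ℝ} (ha : 0 ≤ a) (hb : 0 < a → 0 < b) (hρ : ρ < 1) :
    a * Real.exp (-ρ * (Real.log a - Real.log b)) = a ^ (1 - ρ) * b ^ ρ := by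
  obtain rfl | ha := ha.eq_or_lt
  · rw [Real.zero_rpow (sub_pos.2 hρ).ne', zero_mul, zero_mul]
  · rw [Real.rpow_def_of_pos ha, Real.rpow_def_of_pos (hb ha), ← Real.exp_add]
    nth_rw 1 [← Real.exp_log ha]
    rw [← Real.exp_add]
    ring_nf

section Product

variable {ι α β : Type} [Fintype ι] [DecidableEq ι] [Fintype α] [Fintype β]

/-- The law of a family of independent random variables with laws `p i`: a block of letters when
`ι` indexes time, a random codebook when `ι` is the set of messages. -/
def piPmf {ι α : Type} [Fintype ι] (p : ι → α → ℝ) : (ι → α) → ℝ :=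
  fun x => ∏ i, p i (x i)

/-- The law of a pair of blocks whose letter pairs are independent with laws `p i`. -/
def pairPiPmf {ι α β : Type} [Fintype ι] (p : ι → α × β → ℝ) : (ι → α) × (ι → β) → ℝ :=
  fun x => ∏ i, p i (x.1 i, x.2 i)

lemma isPmf_piPmf {p : ι → α → ℝ} (hp : ∀ i, IsPmf (p i)) : IsPmf (piPmf p) :=
  ⟨fun _ => Finset.prod_nonneg fun i _ => (hp i).1 _, by
    simp only [piPmf, ← Fintype.prod_sum, (hp _).2, Finset.prod_const_one]⟩

lemma isPmf_pairPiPmf {p : ι → α × β → ℝ} (hp : ∀ i, IsPmf (p i)) : IsPmf (pairPiPmf p) :=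
  (isPmf_piPmf hp).comp_equiv (Equiv.arrowProdEquivProdArrow ι (fun _ => α) fun _ => β).symm

lemma mean_piPmf_prod (p F : ι → α → ℝ) :
    mean (piPmf p) (fun x => ∏ i, F i (x i)) = ∏ i, mean (p i) (F i) := by
  simp only [mean, piPmf, ← Finset.prod_mul_distrib, Fintype.prod_sum]

lemma mean_piPmf_eq_mean_mean (p : ι → α → ℝ) (i : ι) (F : (ι → α) → ℝ) :
    mean (piPmf p) F = mean (p i) fun a =>
      mean (piPmf fun j : {j // j ≠ i} => p j) fun y => F ((Equiv.funSplitAt i α).symm (a, y)) := by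
  rw [mean, ← (Equiv.funSplitAt i α).symm.sum_comp, Fintype.sum_prod_type]
  simp only [mean, piPmf, Finset.mul_sum]
  refine Finset.sum_congr rfl fun a _ => Finset.sum_congr rfl fun y _ => ?_
  have hother : ∀ j : {j // j ≠ i}, p j ((Equiv.funSplitAt i α).symm (a, y) j) = p j (y j) :=
    fun j => by simp [Equiv.funSplitAt_symm_apply, j.2]
  rw [Fintype.prod_eq_mul_prod_subtype_ne _ i, Finset.prod_congr rfl fun j _ => hother j]
  simp [Equiv.funSplitAt_symm_apply, mul_assoc]

lemma mean_piPmf_apply {p : ι → α → ℝ} (hp : ∀ i, IsPmf (p i)) (i : ι) (F : α → ℝ) :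
    mean (piPmf p) (fun x => F (x i)) = mean (p i) F := by
  rw [mean_piPmf_eq_mean_mean p i]
  simp [Equiv.funSplitAt_symm_apply,
    (isPmf_piPmf fun j : {j // j ≠ i} => hp j).mean_const]

end Product

section MaximumAPosteriori

variable {A X : Type}

/-- The maximum a posteriori decision: an element of highest score. -/
def mapEstimate [Finite A] [Nonempty A] (s : A → ℝ) : A :=
  (Finite.exists_max s).choose

lemma le_mapEstimate [Finite A] [Nonempty A] (s : A → ℝ) (a : A) : s a ≤ s (mapEstimate s) :=
  (Finite.exists_max s).choose_spec a

variable [Fintype A]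

/-- The score of `a`, capped by the total score of its competitors. It bounds the score that a
maximizing decoder loses by not deciding for `a`. -/
def confusion (s : A → ℝ) (a : A) : ℝ :=
  min (s a) (∑ c : {c // c ≠ a}, s c)

lemma mul_ite_mapEstimate_le_confusion [Nonempty A] {s : A → ℝ} (hs : ∀ a, 0 ≤ s a) (a : A) :
    s a * (if mapEstimate s = a then 0 else 1) ≤ confusion s a := by
  have hcompetitors : 0 ≤ ∑ c : {c // c ≠ a}, s c := Finset.sum_nonneg fun c _ => hs c
  split_ifs with h
  · rw [mul_zero]
    exact le_min (hs a) hcompetitors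
  · rw [mul_one]
    exact le_min le_rfl ((le_mapEstimate s a).trans (Finset.single_le_sum
      (f := fun c : {c // c ≠ a} => s c) (fun c _ => hs c) (Finset.mem_univ ⟨mapEstimate s, h⟩)))

variable [Fintype X]

/-- The total score of all `a : A` when each is independently given an input of law `pa a`. -/
def meanScore (pa : A → X → ℝ) (u : A → X → ℝ) : ℝ :=
  ∑ a, mean (pa a) (u a)

-- Given the codeword of `a`, the codewords of its competitors are still independent of it, so
-- Jensen's inequality for the concave `min` applies to them.
lemma mean_piPmf_confusion_le {pa : A → X → ℝ} (hpa : ∀ a, IsPmf (pa a)) {u : A → X → ℝ}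
    (hu : ∀ a x, 0 ≤ u a x) (a : A) :
    mean (piPmf pa) (fun f => confusion (fun c => u c (f c)) a)
      ≤ mean (pa a) (fun x => min (u a x) (meanScore pa u)) := by
  have hcompetitors : ∑ c : {c // c ≠ a}, mean (pa c) (u c) ≤ meanScore pa u := by
    rw [meanScore, Fintype.sum_eq_add_sum_subtype_ne _ a]
    exact le_add_of_nonneg_left (mean_nonneg (hpa a).1 (hu a))
  rw [mean_piPmf_eq_mean_mean pa a]
  refine mean_mono (hpa a).1 fun x => ?_
  calc mean (piPmf fun c : {c // c ≠ a} => pa c)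
        (fun f => confusion (fun c => u c ((Equiv.funSplitAt a X).symm (x, f) c)) a)
      = mean (piPmf fun c : {c // c ≠ a} => pa c)
          (fun f => min (u a x) (∑ c : {c // c ≠ a}, u c (f c))) := by
        have hother (f : {c // c ≠ a} → X) (c : {c // c ≠ a}) :
            (Equiv.funSplitAt a X).symm (x, f) c = f c := by
          simp [Equiv.funSplitAt_symm_apply, c.2]
        simp only [confusion, hother]
        simp [Equiv.funSplitAt_symm_apply]
    _ ≤ min (u a x) (∑ c : {c // c ≠ a}, mean (pa c) (u c)) := by
        refine ((isPmf_piPmf fun c : {c // c ≠ a} => hpa c).mean_min_le _ _).trans_eq ?_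
        rw [mean_sum]
        simp only [mean_piPmf_apply fun c : {c // c ≠ a} => hpa c]
    _ ≤ min (u a x) (meanScore pa u) := min_le_min_left _ hcompetitors

lemma meanScore_nonneg {pa u : A → X → ℝ} (hpa : ∀ a x, 0 ≤ pa a x) (hu : ∀ a x, 0 ≤ u a x) :
    0 ≤ meanScore pa u :=
  Finset.sum_nonneg fun a _ => mean_nonneg (hpa a) (hu a)

lemma meanScore_pos {pa u : A → X → ℝ} (hpa : ∀ a x, 0 ≤ pa a x) (hu : ∀ a x, 0 ≤ u a x)
    {a : A} {x : X} (h : 0 < pa a x * u a x) : 0 < meanScore pa u :=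
  Finset.sum_pos' (fun a _ => mean_nonneg (hpa a) (hu a)) ⟨a, Finset.mem_univ a,
    Finset.sum_pos' (fun x _ => mul_nonneg (hpa a x) (hu a x)) ⟨x, Finset.mem_univ x, h⟩⟩

end MaximumAPosteriori

section OneShot

variable {S1 S2 X1 X2 Y1 Y2 : Type} {pS : S1 × S2 → ℝ} {chan : X1 → X2 → Y1 × Y2 → ℝ}

/-- The two-way channel with the users renamed. -/
def swapChannel (chan : X1 → X2 → Y1 × Y2 → ℝ) : X2 → X1 → Y2 × Y1 → ℝ :=
  fun x2 x1 y => chan x1 x2 y.swap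

variable [Fintype Y1]

/-- The channel `p(y2 | x1, x2)` to user 2. -/
def outputMarginal (chan : X1 → X2 → Y1 × Y2 → ℝ) (x1 : X1) (x2 : X2) (y2 : Y2) : ℝ :=
  ∑ y1, chan x1 x2 (y1, y2)

/-- The score `p(s1, s2) p(y2 | x1, x2)` that user 2, knowing `s2`, `x2` and `y2`, gives to a
source symbol `s1` encoded as `x1`. -/
def score (pS : S1 × S2 → ℝ) (chan : X1 → X2 → Y1 × Y2 → ℝ) (s2 : S2) (x2 : X2) (y2 : Y2) :
    S1 → X1 → ℝ :=
  fun s1 x1 => pS (s1, s2) * outputMarginal chan x1 x2 y2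

/-- The maximum a posteriori decoder of user 2. -/
def mapDecoder [Finite S1] [Nonempty S1] (pS : S1 × S2 → ℝ) (chan : X1 → X2 → Y1 × Y2 → ℝ)
    (f1 : S1 → X1) (f2 : S2 → X2) : S2 → Y2 → S1 :=
  fun s2 y2 => mapEstimate fun s1 => score pS chan s2 (f2 s2) y2 s1 (f1 s1)

lemma outputMarginal_nonneg (hchan : ∀ x1 x2 y, 0 ≤ chan x1 x2 y) (x1 : X1) (x2 : X2) (y2 : Y2) :
    0 ≤ outputMarginal chan x1 x2 y2 :=
  Finset.sum_nonneg fun _ _ => hchan x1 x2 _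

lemma score_nonneg (hpS : ∀ s, 0 ≤ pS s) (hchan : ∀ x1 x2 y, 0 ≤ chan x1 x2 y) (s2 : S2)
    (x2 : X2) (y2 : Y2) (s1 : S1) (x1 : X1) : 0 ≤ score pS chan s2 x2 y2 s1 x1 :=
  mul_nonneg (hpS _) (outputMarginal_nonneg hchan x1 x2 y2)

lemma mean_piPmf_confusion_score_le [Fintype S1] [Fintype X1] {px1 : S1 → X1 → ℝ}
    (hpS : ∀ s, 0 ≤ pS s) (hchan : ∀ x1 x2 y, 0 ≤ chan x1 x2 y)
    (hpx1 : ∀ s1, IsPmf (px1 s1)) {ρ : ℝ} (hρ : ρ ∈ Set.Icc (0 : ℝ) 1) (s : S1 × S2) (x2 : X2)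
    (y2 : Y2) :
    mean (piPmf px1) (fun f1 => confusion (fun s1 => score pS chan s.2 x2 y2 s1 (f1 s1)) s.1)
      ≤ mean (px1 s.1) fun x1 => score pS chan s.2 x2 y2 s.1 x1 ^ (1 - ρ) *
          meanScore px1 (score pS chan s.2 x2 y2) ^ ρ := by
  have hscore := score_nonneg hpS hchan s.2 x2 y2
  exact (mean_piPmf_confusion_le hpx1 hscore s.1).trans <| mean_mono (hpx1 s.1).1 fun x1 =>
    min_le_rpow_mul_rpow (hscore s.1 x1) (meanScore_nonneg (fun s1 => (hpx1 s1).1) hscore) hρ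

variable [Fintype Y2]

lemma isPmf_swapChannel (hchan : ∀ x1 x2, IsPmf (chan x1 x2)) (x2 : X2) (x1 : X1) :
    IsPmf (swapChannel chan x2 x1) :=
  (hchan x1 x2).comp_equiv (Equiv.prodComm Y2 Y1)

lemma mul_mean_snd_eq_sum_score (s : S1 × S2) (x1 : X1) (x2 : X2) (F : Y2 → ℝ) :
    pS s * mean (chan x1 x2) (fun y => F y.2) = ∑ y2, score pS chan s.2 x2 y2 s.1 x1 * F y2 := by
  simp only [mean, score, outputMarginal, Fintype.sum_prod_type_right, Finset.mul_sum,
    Finset.sum_mul, mul_assoc]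

variable [Fintype S1] [Fintype S2]

/-- The probability that user 2 decodes the source symbol of user 1 incorrectly. -/
def receiverError (pS : S1 × S2 → ℝ) (chan : X1 → X2 → Y1 × Y2 → ℝ) (f1 : S1 → X1)
    (f2 : S2 → X2) (d : S2 → Y2 → S1) : ℝ :=
  mean pS fun s => mean (chan (f1 s.1) (f2 s.2)) fun y => if d s.2 y.2 = s.1 then 0 else 1

/-- The probability that at least one of the users decodes incorrectly. -/
def errorProb (pS : S1 × S2 → ℝ) (chan : X1 → X2 → Y1 × Y2 → ℝ) (f1 : S1 → X1)
    (f2 : S2 → X2) (d1 : S1 → Y1 → S2) (d2 : S2 → Y2 → S1) : ℝ :=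
  mean pS fun s => mean (chan (f1 s.1) (f2 s.2)) fun y =>
    if d1 s.1 y.1 = s.2 ∧ d2 s.2 y.2 = s.1 then 0 else 1

lemma receiverError_mapDecoder_le [Nonempty S1] (hpS : ∀ s, 0 ≤ pS s)
    (hchan : ∀ x1 x2 y, 0 ≤ chan x1 x2 y) (f1 : S1 → X1) (f2 : S2 → X2) :
    receiverError pS chan f1 f2 (mapDecoder pS chan f1 f2) ≤ ∑ s : S1 × S2, ∑ y2,
      confusion (fun s1 => score pS chan s.2 (f2 s.2) y2 s1 (f1 s1)) s.1 := by
  refine Finset.sum_le_sum fun s _ => ?_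
  rw [mul_mean_snd_eq_sum_score s (f1 s.1) (f2 s.2)
    fun y2 => if mapDecoder pS chan f1 f2 s.2 y2 = s.1 then 0 else 1]
  exact Finset.sum_le_sum fun y2 _ =>
    mul_ite_mapEstimate_le_confusion (fun s1 => score_nonneg hpS hchan s.2 (f2 s.2) y2 s1 (f1 s1)) _

lemma receiverError_swap (pS : S1 × S2 → ℝ) (chan : X1 → X2 → Y1 × Y2 → ℝ) (f1 : S1 → X1)
    (f2 : S2 → X2) (d1 : S1 → Y1 → S2) :
    receiverError (pS ∘ Prod.swap) (swapChannel chan) f2 f1 d1 =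
      mean pS fun s => mean (chan (f1 s.1) (f2 s.2)) fun y =>
        if d1 s.1 y.1 = s.2 then 0 else 1 := by
  refine Eq.trans ?_ (mean_comp_equiv (Equiv.prodComm S2 S1) pS _)
  exact congrArg (mean _) (funext fun s => mean_comp_equiv (Equiv.prodComm Y2 Y1)
    (chan (f1 s.2) (f2 s.1)) fun y => if d1 s.2 y.1 = s.1 then 0 else 1)

lemma errorProb_le_receiverError_add (hpS : ∀ s, 0 ≤ pS s) (hchan : ∀ x1 x2 y, 0 ≤ chan x1 x2 y)
    (f1 : S1 → X1) (f2 : S2 → X2) (d1 : S1 → Y1 → S2) (d2 : S2 → Y2 → S1) :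
    errorProb pS chan f1 f2 d1 d2 ≤ receiverError pS chan f1 f2 d2 +
      receiverError (pS ∘ Prod.swap) (swapChannel chan) f2 f1 d1 := by
  rw [receiverError_swap, receiverError, ← mean_add]
  refine mean_mono hpS fun s => ?_
  rw [← mean_add]
  refine mean_mono (hchan _ _) fun y => ?_
  split_ifs <;> simp_all

variable [Fintype X1] [Fintype X2] {px1 : S1 → X1 → ℝ} {px2 : S2 → X2 → ℝ}

/-- Gallager's bound with parameter `ρ` on the decoding error of user 2 for random codes whose
codewords are independent with laws `px1` and `px2`. -/
def tiltedBound (ρ : ℝ) (pS : S1 × S2 → ℝ) (px1 : S1 → X1 → ℝ) (px2 : S2 → X2 → ℝ)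
    (chan : X1 → X2 → Y1 × Y2 → ℝ) : ℝ :=
  ∑ s : S1 × S2, mean (px1 s.1) fun x1 => mean (px2 s.2) fun x2 => ∑ y2,
    score pS chan s.2 x2 y2 s.1 x1 ^ (1 - ρ) * meanScore px1 (score pS chan s.2 x2 y2) ^ ρ

lemma mean_receiverError_mapDecoder_le [Nonempty S1] (hpS : ∀ s, 0 ≤ pS s)
    (hchan : ∀ x1 x2 y, 0 ≤ chan x1 x2 y) (hpx1 : ∀ s1, IsPmf (px1 s1))
    (hpx2 : ∀ s2, IsPmf (px2 s2)) {ρ : ℝ} (hρ : ρ ∈ Set.Icc (0 : ℝ) 1) :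
    mean (piPmf px2) (fun f2 => mean (piPmf px1) fun f1 =>
      receiverError pS chan f1 f2 (mapDecoder pS chan f1 f2)) ≤ tiltedBound ρ pS px1 px2 chan := by
  have hcode1 := isPmf_piPmf hpx1
  have hcode2 := isPmf_piPmf hpx2
  refine (mean_mono hcode2.1 fun f2 => mean_mono hcode1.1 fun f1 =>
    receiverError_mapDecoder_le hpS hchan f1 f2).trans ?_
  simp only [tiltedBound, mean_sum]
  refine Finset.sum_le_sum fun s _ => Finset.sum_le_sum fun y2 _ => ?_
  rw [mean_piPmf_apply hpx2 s.2 fun x2 => mean (piPmf px1) fun f1 =>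
    confusion (fun s1 => score pS chan s.2 x2 y2 s1 (f1 s1)) s.1, mean_comm (px1 s.1)]
  exact mean_mono (hpx2 s.2).1 fun x2 =>
    mean_piPmf_confusion_score_le hpS hchan hpx1 hρ s x2 y2

lemma exists_errorProb_le_tiltedBound_add (hpS : IsPmf pS) (hchan : ∀ x1 x2, IsPmf (chan x1 x2))
    (hpx1 : ∀ s1, IsPmf (px1 s1)) (hpx2 : ∀ s2, IsPmf (px2 s2)) {ρ₁ ρ₂ : ℝ}
    (hρ₁ : ρ₁ ∈ Set.Icc (0 : ℝ) 1) (hρ₂ : ρ₂ ∈ Set.Icc (0 : ℝ) 1) :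
    ∃ (f1 : S1 → X1) (f2 : S2 → X2) (d1 : S1 → Y1 → S2) (d2 : S2 → Y2 → S1),
      errorProb pS chan f1 f2 d1 d2 ≤ tiltedBound ρ₂ pS px1 px2 chan +
        tiltedBound ρ₁ (pS ∘ Prod.swap) px2 px1 (swapChannel chan) := by
  have hpS' : IsPmf (pS ∘ Prod.swap) := hpS.comp_equiv (Equiv.prodComm S2 S1)
  obtain ⟨s1, s2⟩ := hpS.nonempty
  have : Nonempty S1 := ⟨s1⟩
  have : Nonempty S2 := ⟨s2⟩
  have hbound2 := mean_receiverError_mapDecoder_le hpS.1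
    (fun x1 x2 => (hchan x1 x2).1) hpx1 hpx2 hρ₂
  have hbound1 := mean_receiverError_mapDecoder_le hpS'.1
    (fun x2 x1 => (isPmf_swapChannel hchan x2 x1).1) hpx2 hpx1 hρ₁
  rw [mean_comm] at hbound1
  have hsum := add_le_add hbound2 hbound1
  simp only [← mean_add] at hsum
  obtain ⟨f2, hf2⟩ := (isPmf_piPmf hpx2).exists_le_of_mean_le hsum
  obtain ⟨f1, hf1⟩ := (isPmf_piPmf hpx1).exists_le_of_mean_le hf2
  exact ⟨f1, f2, _, _,
    (errorProb_le_receiverError_add hpS.1 (fun x1 x2 => (hchan x1 x2).1) f1 f2 _ _).trans hf1⟩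

end OneShot

section Block

variable {ι S1 S2 X1 X2 Y1 Y2 : Type} [Fintype ι]

/-- The encoder that independently draws the `i`-th input of a block from `px i`, given the
`i`-th source symbol. -/
def blockEncoder {S X : Type} (px : ι → S → X → ℝ) : (ι → S) → (ι → X) → ℝ :=
  fun s => piPmf fun i => px i (s i)

/-- The block channel given by memoryless uses of `chan`. -/
def blockChannel (chan : X1 → X2 → Y1 × Y2 → ℝ) :
    (ι → X1) → (ι → X2) → (ι → Y1) × (ι → Y2) → ℝ :=
  fun x1 x2 => pairPiPmf fun i => chan (x1 i) (x2 i)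

lemma swapChannel_blockChannel (chan : X1 → X2 → Y1 × Y2 → ℝ) :
    swapChannel (blockChannel (ι := ι) chan) = blockChannel (swapChannel chan) :=
  rfl

lemma pairPiPmf_comp_swap (pS : S1 × S2 → ℝ) :
    pairPiPmf (fun _ : ι => pS) ∘ Prod.swap = pairPiPmf fun _ : ι => pS ∘ Prod.swap :=
  rfl

variable [DecidableEq ι]

lemma isPmf_blockEncoder {S X : Type} [Fintype X] {px : ι → S → X → ℝ}
    (hpx : ∀ i s, IsPmf (px i s)) (s : ι → S) : IsPmf (blockEncoder px s) :=
  isPmf_piPmf fun i => hpx i (s i)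

variable [Fintype Y1]

lemma score_block (pS : S1 × S2 → ℝ) (chan : X1 → X2 → Y1 × Y2 → ℝ) (s2 : ι → S2) (x2 : ι → X2)
    (y2 : ι → Y2) (s1 : ι → S1) (x1 : ι → X1) :
    score (pairPiPmf fun _ => pS) (blockChannel chan) s2 x2 y2 s1 x1 =
      ∏ i, score pS chan (s2 i) (x2 i) (y2 i) (s1 i) (x1 i) := by
  simp only [score, outputMarginal, blockChannel, pairPiPmf, Finset.prod_mul_distrib,
    Fintype.prod_sum]

lemma meanScore_block [Fintype S1] [Fintype X1] (pS : S1 × S2 → ℝ) (px1 : ι → S1 → X1 → ℝ)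
    (chan : X1 → X2 → Y1 × Y2 → ℝ) (s2 : ι → S2) (x2 : ι → X2) (y2 : ι → Y2) :
    meanScore (blockEncoder px1) (score (pairPiPmf fun _ => pS) (blockChannel chan) s2 x2 y2) =
      ∏ i, meanScore (px1 i) (score pS chan (s2 i) (x2 i) (y2 i)) := by
  simp only [meanScore, Fintype.prod_sum, ← mean_piPmf_prod, ← score_block]
  rfl

variable [Fintype Y2]

lemma isPmf_blockChannel {chan : X1 → X2 → Y1 × Y2 → ℝ} (hchan : ∀ x1 x2, IsPmf (chan x1 x2))
    (x1 : ι → X1) (x2 : ι → X2) : IsPmf (blockChannel chan x1 x2) :=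
  isPmf_pairPiPmf fun i => hchan (x1 i) (x2 i)

variable [Fintype S1] [Fintype S2] [Fintype X1] [Fintype X2]

lemma twErrRestricted_eq_errorProb (pS : S1 × S2 → ℝ) (chan : X1 → X2 → Y1 × Y2 → ℝ) {m n : ℕ}
    (f1 : (Fin m → S1) → Fin n → X1) (f2 : (Fin m → S2) → Fin n → X2)
    (g1 : (Fin m → S1) → (Fin n → Y1) → Fin m → S2)
    (g2 : (Fin m → S2) → (Fin n → Y2) → Fin m → S1) :
    twErrRestricted pS chan m n f1 f2 g1 g2 =
      errorProb (pairPiPmf fun _ => pS) (blockChannel chan) f1 f2 g1 g2 := by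
  rw [errorProb, mean, ← (Equiv.arrowProdEquivProdArrow (Fin m) (fun _ => S1) fun _ => S2).sum_comp]
  refine Finset.sum_congr rfl fun s _ => ?_
  rw [mean, ← (Equiv.arrowProdEquivProdArrow (Fin n) (fun _ => Y1) fun _ => Y2).sum_comp,
    Finset.mul_sum]
  refine Finset.sum_congr rfl fun y _ => ?_
  rw [mul_assoc]
  congr

lemma tiltedBound_block {ρ : ℝ} {pS : S1 × S2 → ℝ} {px1 : ι → S1 → X1 → ℝ}
    {px2 : ι → S2 → X2 → ℝ} {chan : X1 → X2 → Y1 × Y2 → ℝ} (hpS : ∀ s, 0 ≤ pS s)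
    (hchan : ∀ x1 x2 y, 0 ≤ chan x1 x2 y) (hpx1 : ∀ i s1 x1, 0 ≤ px1 i s1 x1) :
    tiltedBound ρ (pairPiPmf fun _ => pS) (blockEncoder px1) (blockEncoder px2)
        (blockChannel chan) = ∏ i, tiltedBound ρ pS (px1 i) (px2 i) chan := by
  have hscore := score_nonneg hpS hchan
  have hmeanScore (i : ι) (s2 x2 y2) := meanScore_nonneg (hpx1 i) (hscore s2 x2 y2)
  simp only [tiltedBound, Fintype.prod_sum, ← mean_piPmf_prod, Finset.prod_mul_distrib,
    Real.finsetProd_rpow _ _ fun _ _ => hscore _ _ _ _ _,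
    Real.finsetProd_rpow _ _ fun _ _ => hmeanScore _ _ _ _, ← score_block, ← meanScore_block]
  exact ((Equiv.arrowProdEquivProdArrow ι (fun _ => S1) fun _ => S2).sum_comp _).symm

lemma exists_twErrRestricted_le_prod {n : ℕ} {pS : S1 × S2 → ℝ} {chan : X1 → X2 → Y1 × Y2 → ℝ}
    {px1 : Fin n → S1 → X1 → ℝ} {px2 : Fin n → S2 → X2 → ℝ} (hpS : IsPmf pS)
    (hchan : ∀ x1 x2, IsPmf (chan x1 x2)) (hpx1 : ∀ i s1, IsPmf (px1 i s1))
    (hpx2 : ∀ i s2, IsPmf (px2 i s2)) {ρ₁ ρ₂ : ℝ} (hρ₁ : ρ₁ ∈ Set.Icc (0 : ℝ) 1)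
    (hρ₂ : ρ₂ ∈ Set.Icc (0 : ℝ) 1) :
    ∃ (f1 : (Fin n → S1) → Fin n → X1) (f2 : (Fin n → S2) → Fin n → X2)
      (g1 : (Fin n → S1) → (Fin n → Y1) → Fin n → S2)
      (g2 : (Fin n → S2) → (Fin n → Y2) → Fin n → S1),
      twErrRestricted pS chan n n f1 f2 g1 g2 ≤ (∏ i, tiltedBound ρ₂ pS (px1 i) (px2 i) chan) +
        ∏ i, tiltedBound ρ₁ (pS ∘ Prod.swap) (px2 i) (px1 i) (swapChannel chan) := by
  have hcode := exists_errorProb_le_tiltedBound_add (isPmf_pairPiPmf fun _ : Fin n => hpS)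
    (isPmf_blockChannel hchan) (isPmf_blockEncoder hpx1) (isPmf_blockEncoder hpx2) hρ₁ hρ₂
  rw [pairPiPmf_comp_swap, swapChannel_blockChannel,
    tiltedBound_block hpS.1 (fun x1 x2 => (hchan x1 x2).1) fun i s1 => (hpx1 i s1).1,
    tiltedBound_block (pS := pS ∘ Prod.swap) (fun s => hpS.1 s.swap)
      (fun x2 x1 => (isPmf_swapChannel hchan x2 x1).1) fun i s2 => (hpx2 i s2).1] at hcode
  simpa only [twErrRestricted_eq_errorProb] using hcode

lemma exists_twErrRestricted_le {Q : Type} [Fintype Q] {n : ℕ} {pq : Q → ℝ} {pS : S1 × S2 → ℝ}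
    {chan : X1 → X2 → Y1 × Y2 → ℝ} {px1 : Q → S1 → X1 → ℝ} {px2 : Q → S2 → X2 → ℝ}
    (hpq : IsPmf pq) (hpS : IsPmf pS) (hchan : ∀ x1 x2, IsPmf (chan x1 x2))
    (hpx1 : ∀ q s1, IsPmf (px1 q s1)) (hpx2 : ∀ q s2, IsPmf (px2 q s2)) {ρ₁ ρ₂ : ℝ}
    (hρ₁ : ρ₁ ∈ Set.Icc (0 : ℝ) 1) (hρ₂ : ρ₂ ∈ Set.Icc (0 : ℝ) 1) :
    ∃ (f1 : (Fin n → S1) → Fin n → X1) (f2 : (Fin n → S2) → Fin n → X2)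
      (g1 : (Fin n → S1) → (Fin n → Y1) → Fin n → S2)
      (g2 : (Fin n → S2) → (Fin n → Y2) → Fin n → S1),
      twErrRestricted pS chan n n f1 f2 g1 g2 ≤
        mean pq (fun q => tiltedBound ρ₂ pS (px1 q) (px2 q) chan) ^ n +
        mean pq (fun q => tiltedBound ρ₁ (pS ∘ Prod.swap) (px2 q) (px1 q)
          (swapChannel chan)) ^ n := by
  have haverage : mean (piPmf fun _ : Fin n => pq) (fun q =>
      (∏ i, tiltedBound ρ₂ pS (px1 (q i)) (px2 (q i)) chan) +
        ∏ i, tiltedBound ρ₁ (pS ∘ Prod.swap) (px2 (q i)) (px1 (q i)) (swapChannel chan)) =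
      mean pq (fun q => tiltedBound ρ₂ pS (px1 q) (px2 q) chan) ^ n +
        mean pq (fun q => tiltedBound ρ₁ (pS ∘ Prod.swap) (px2 q) (px1 q)
          (swapChannel chan)) ^ n := by
    rw [mean_add, mean_piPmf_prod (fun _ => pq) fun _ q => tiltedBound ρ₂ pS (px1 q) (px2 q) chan,
      mean_piPmf_prod (fun _ => pq) fun _ q =>
        tiltedBound ρ₁ (pS ∘ Prod.swap) (px2 q) (px1 q) (swapChannel chan)]
    simp only [Fin.prod_const]
  obtain ⟨q, hq⟩ := (isPmf_piPmf fun _ : Fin n => hpq).exists_le_of_mean_le haverage.le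
  obtain ⟨f1, f2, g1, g2, hcode⟩ := exists_twErrRestricted_le_prod hpS hchan
    (fun i => hpx1 (q i)) (fun i => hpx2 (q i)) hρ₁ hρ₂
  exact ⟨f1, f2, g1, g2, hcode.trans hq⟩

end Block

section Entropy

variable {Ω Ω' α : Type} [Fintype Ω] [Fintype Ω']

lemma prD_pos {μ : Ω → ℝ} (hμ : ∀ ω, 0 ≤ μ ω) (X : Ω → α) {ω : Ω} (hω : μ ω ≠ 0) :
    0 < prD μ X (X ω) := by
  refine Finset.sum_pos' (fun ω' _ => ?_) ⟨ω, Finset.mem_univ ω, ?_⟩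
  · exact ite_nonneg (hμ ω') le_rfl
  · rw [if_pos rfl]
    exact (hμ ω).lt_of_ne' hω

variable [Fintype α]

lemma ent_eq_neg_mean_log_prD (μ : Ω → ℝ) (X : Ω → α) :
    ent μ X = -mean μ fun ω => Real.log (prD μ X (X ω)) := by
  simp only [ent, prD, mean, neg_inj, Finset.sum_mul]
  rw [Finset.sum_comm]
  simp only [ite_mul, zero_mul, Fintype.sum_ite_eq]

lemma ent_comp_equiv_s11 (e : Ω ≃ Ω') (μ : Ω' → ℝ) (X : Ω' → α) : ent (μ ∘ e) (X ∘ e) = ent μ X := by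
  have hprD : prD (μ ∘ e) (X ∘ e) = prD μ X :=
    funext fun a => e.sum_comp fun ω => if X ω = a then μ ω else 0
  rw [ent, ent, hprD]

lemma condEnt_comp_equiv {β : Type} [Fintype β] (e : Ω ≃ Ω') (μ : Ω' → ℝ) (X : Ω' → α)
    (Y : Ω' → β) : condEnt (μ ∘ e) (X ∘ e) (Y ∘ e) = condEnt μ X Y :=
  congrArg₂ _ (ent_comp_equiv_s11 e μ fun ω => (X ω, Y ω)) (ent_comp_equiv_s11 e μ Y)

lemma condMutInf_comp_equiv {β γ : Type} [Fintype β] [Fintype γ] (e : Ω ≃ Ω') (μ : Ω' → ℝ)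
    (X : Ω' → α) (Y : Ω' → β) (Z : Ω' → γ) :
    condMutInf (μ ∘ e) (X ∘ e) (Y ∘ e) (Z ∘ e) = condMutInf μ X Y Z :=
  congrArg₂ _ (condEnt_comp_equiv e μ X Z) (condEnt_comp_equiv e μ X fun ω => (Y ω, Z ω))

end Entropy

section Information

variable {S1 S2 X1 X2 Y1 Y2 : Type} {nq : ℕ} {pq : Fin nq → ℝ} {pS : S1 × S2 → ℝ}
  {px1 : Fin nq → S1 → X1 → ℝ} {px2 : Fin nq → S2 → X2 → ℝ} {chan : X1 → X2 → Y1 × Y2 → ℝ}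

/-- The renaming of the users in the single-letter distribution. -/
def swapUsers (Q S1 S2 X1 X2 Y1 Y2 : Type) :
    Q × (S2 × S1) × X2 × X1 × (Y2 × Y1) ≃ Q × (S1 × S2) × X1 × X2 × (Y1 × Y2) where
  toFun := fun ⟨q, s, x2, x1, y⟩ => (q, s.swap, x1, x2, y.swap)
  invFun := fun ⟨q, s, x1, x2, y⟩ => (q, s.swap, x2, x1, y.swap)
  left_inv _ := rfl
  right_inv _ := rfl

lemma twJointMeasure_comp_swapUsers :
    twJointMeasure nq pq pS px1 px2 chan ∘ swapUsers _ _ _ _ _ _ _ =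
      twJointMeasure nq pq (pS ∘ Prod.swap) px2 px1 (swapChannel chan) := by
  funext z
  simp only [twJointMeasure, swapUsers, swapChannel, Function.comp_apply, Equiv.coe_fn_mk,
    Prod.fst_swap, Prod.snd_swap, mul_right_comm]

variable [Fintype S1] [Fintype S2] [Fintype X1] [Fintype X2] [Fintype Y1] [Fintype Y2]

/-- The logarithm of the posterior probability of `(s1, x1)` for user 2, who knows `q`, `s2`, `x2`
and `y2`, relative to the encoding probability `p(x1 | q, s1)`. -/
def logScoreRatio (pS : S1 × S2 → ℝ) (px1 : Fin nq → S1 → X1 → ℝ)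
    (chan : X1 → X2 → Y1 × Y2 → ℝ) : Fin nq × (S1 × S2) × X1 × X2 × (Y1 × Y2) → ℝ :=
  fun ⟨q, s, x1, x2, y⟩ => Real.log (score pS chan s.2 x2 y.2 s.1 x1) -
    Real.log (meanScore (px1 q) (score pS chan s.2 x2 y.2))

lemma twJointMeasure_nonneg (hpq : IsPmf pq) (hpS : IsPmf pS) (hpx1 : ∀ q s1, IsPmf (px1 q s1))
    (hpx2 : ∀ q s2, IsPmf (px2 q s2)) (hchan : ∀ x1 x2, IsPmf (chan x1 x2))
    (z : Fin nq × (S1 × S2) × X1 × X2 × (Y1 × Y2)) :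
    0 ≤ twJointMeasure nq pq pS px1 px2 chan z :=
  mul_nonneg (mul_nonneg (mul_nonneg (mul_nonneg (hpq.1 _) (hpS.1 _)) ((hpx1 _ _).1 _))
    ((hpx2 _ _).1 _)) ((hchan _ _).1 _)

lemma mean_twJointMeasure (F : Fin nq × (S1 × S2) × X1 × X2 × (Y1 × Y2) → ℝ) :
    mean (twJointMeasure nq pq pS px1 px2 chan) F =
      mean pq fun q => mean pS fun s => mean (px1 q s.1) fun x1 => mean (px2 q s.2) fun x2 =>
        mean (chan x1 x2) fun y => F (q, s, x1, x2, y) := by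
  simp only [mean, twJointMeasure, Fintype.sum_prod_type, Finset.mul_sum, mul_assoc]

lemma mean_twJointMeasure_source (hpq : IsPmf pq) (hpx1 : ∀ q s1, IsPmf (px1 q s1))
    (hpx2 : ∀ q s2, IsPmf (px2 q s2)) (hchan : ∀ x1 x2, IsPmf (chan x1 x2)) (F : S1 × S2 → ℝ) :
    mean (twJointMeasure nq pq pS px1 px2 chan) (fun z => F z.2.1) = mean pS F := by
  simp only [mean_twJointMeasure, (hchan _ _).mean_const, (hpx2 _ _).mean_const,
    (hpx1 _ _).mean_const, hpq.mean_const]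

lemma isPmf_twJointMeasure (hpq : IsPmf pq) (hpS : IsPmf pS) (hpx1 : ∀ q s1, IsPmf (px1 q s1))
    (hpx2 : ∀ q s2, IsPmf (px2 q s2)) (hchan : ∀ x1 x2, IsPmf (chan x1 x2)) :
    IsPmf (twJointMeasure nq pq pS px1 px2 chan) := by
  refine ⟨twJointMeasure_nonneg hpq hpS hpx1 hpx2 hchan, ?_⟩
  have htotal := mean_twJointMeasure_source (pS := pS) hpq hpx1 hpx2 hchan fun _ => 1
  rw [hpS.mean_const] at htotal
  simpa only [mean, mul_one] using htotal

lemma prD_twJointMeasure_input_output_side (hchan : ∀ x1 x2, IsPmf (chan x1 x2)) (q : Fin nq)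
    (s2 : S2) (x1 : X1) (x2 : X2) (y2 : Y2) :
    prD (twJointMeasure nq pq pS px1 px2 chan)
        (fun z => (z.2.2.1, z.2.2.2.2.2, z.2.2.2.1, z.2.1.2, z.1)) (x1, y2, x2, s2, q) =
      prD (twJointMeasure nq pq pS px1 px2 chan) (fun z => (z.2.2.1, z.2.2.2.1, z.2.1.2, z.1))
        (x1, x2, s2, q) * outputMarginal chan x1 x2 y2 := by
  have hsum := fun x1 x2 => (hchan x1 x2).2
  simp only [Fintype.sum_prod_type] at hsum
  simp only [prD, twJointMeasure, Fintype.sum_prod_type, Prod.mk.injEq, ite_and,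
    Finset.sum_ite_irrel, Finset.sum_const_zero, Fintype.sum_ite_eq', ← Finset.mul_sum,
    ← Finset.sum_mul, outputMarginal, hsum, mul_one]

lemma prD_twJointMeasure_side (hpx1 : ∀ q s1, IsPmf (px1 q s1))
    (hchan : ∀ x1 x2, IsPmf (chan x1 x2)) (q : Fin nq) (s2 : S2) (x2 : X2) :
    prD (twJointMeasure nq pq pS px1 px2 chan) (fun z => (z.2.2.2.1, z.2.1.2, z.1)) (x2, s2, q) =
      pq q * px2 q s2 x2 * prD pS (fun s => s.2) s2 := by
  have hsum := fun x1 x2 => (hchan x1 x2).2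
  simp only [Fintype.sum_prod_type] at hsum
  simp only [prD, twJointMeasure, Fintype.sum_prod_type, Prod.mk.injEq, ite_and,
    Finset.sum_ite_irrel, Finset.sum_const_zero, Fintype.sum_ite_eq', ← Finset.mul_sum, hsum,
    mul_one, ← Finset.sum_mul, (hpx1 _ _).2]
  ring

lemma prD_twJointMeasure_output_side (q : Fin nq) (s2 : S2) (x2 : X2) (y2 : Y2) :
    prD (twJointMeasure nq pq pS px1 px2 chan)
        (fun z => (z.2.2.2.2.2, z.2.2.2.1, z.2.1.2, z.1)) (y2, x2, s2, q) =
      pq q * px2 q s2 x2 * meanScore (px1 q) (score pS chan s2 x2 y2) := by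
  simp only [prD, twJointMeasure, Fintype.sum_prod_type, Prod.mk.injEq, ite_and,
    Finset.sum_ite_irrel, Finset.sum_const_zero, Fintype.sum_ite_eq', ← Finset.mul_sum,
    meanScore, score, outputMarginal, mean]
  simp only [Finset.mul_sum _ _ (pq q * px2 q s2 x2)]
  exact Finset.sum_congr rfl fun _ _ => Finset.sum_congr rfl fun _ _ => by ring

lemma logScoreRatio_add_log_prD (hpq : IsPmf pq) (hpS : IsPmf pS)
    (hpx1 : ∀ q s1, IsPmf (px1 q s1)) (hpx2 : ∀ q s2, IsPmf (px2 q s2))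
    (hchan : ∀ x1 x2, IsPmf (chan x1 x2)) {z : Fin nq × (S1 × S2) × X1 × X2 × (Y1 × Y2)}
    (hz : twJointMeasure nq pq pS px1 px2 chan z ≠ 0) :
    logScoreRatio pS px1 chan z +
        Real.log (prD (twJointMeasure nq pq pS px1 px2 chan)
          (fun z => (z.2.2.1, z.2.2.2.1, z.2.1.2, z.1)) (z.2.2.1, z.2.2.2.1, z.2.1.2, z.1)) +
        Real.log (prD (twJointMeasure nq pq pS px1 px2 chan)
          (fun z => (z.2.2.2.2.2, z.2.2.2.1, z.2.1.2, z.1))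
          (z.2.2.2.2.2, z.2.2.2.1, z.2.1.2, z.1)) +
        Real.log (prD pS (fun s => s.2) z.2.1.2) =
      Real.log (prD (twJointMeasure nq pq pS px1 px2 chan)
          (fun z => (z.2.2.1, z.2.2.2.2.2, z.2.2.2.1, z.2.1.2, z.1))
          (z.2.2.1, z.2.2.2.2.2, z.2.2.2.1, z.2.1.2, z.1)) +
        Real.log (prD (twJointMeasure nq pq pS px1 px2 chan)
          (fun z => (z.2.2.2.1, z.2.1.2, z.1)) (z.2.2.2.1, z.2.1.2, z.1)) +
        Real.log (prD pS (fun s => (s.1, s.2)) z.2.1) := by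
  have hpos {α : Type} (X : Fin nq × (S1 × S2) × X1 × X2 × (Y1 × Y2) → α) :=
    (prD_pos (twJointMeasure_nonneg hpq hpS hpx1 hpx2 hchan) X hz).ne'
  have hinputs := hpos fun z => (z.2.2.1, z.2.2.2.2.2, z.2.2.2.1, z.2.1.2, z.1)
  have hside := hpos fun z => (z.2.2.2.1, z.2.1.2, z.1)
  have houtput := hpos fun z => (z.2.2.2.2.2, z.2.2.2.1, z.2.1.2, z.1)
  obtain ⟨q, ⟨s1, s2⟩, x1, x2, y1, y2⟩ := z
  have hsource : prD pS (fun s => (s.1, s.2)) (s1, s2) = pS (s1, s2) := by simp [prD]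
  have hS : pS (s1, s2) ≠ 0 := fun h => hz (by simp [twJointMeasure, h])
  simp only [prD_twJointMeasure_input_output_side hchan, prD_twJointMeasure_side hpx1 hchan,
    prD_twJointMeasure_output_side, hsource, logScoreRatio, score] at hinputs hside houtput ⊢
  rw [Real.log_mul (left_ne_zero_of_mul hside) (right_ne_zero_of_mul hside),
    Real.log_mul (left_ne_zero_of_mul houtput) (right_ne_zero_of_mul houtput),
    Real.log_mul (left_ne_zero_of_mul hinputs) (right_ne_zero_of_mul hinputs),
    Real.log_mul hS (right_ne_zero_of_mul hinputs)]
  ring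

lemma mean_logScoreRatio (hpq : IsPmf pq) (hpS : IsPmf pS) (hpx1 : ∀ q s1, IsPmf (px1 q s1))
    (hpx2 : ∀ q s2, IsPmf (px2 q s2)) (hchan : ∀ x1 x2, IsPmf (chan x1 x2)) :
    mean (twJointMeasure nq pq pS px1 px2 chan) (logScoreRatio pS px1 chan) =
      condMutInf (twJointMeasure nq pq pS px1 px2 chan) (fun z => z.2.2.1)
          (fun z => z.2.2.2.2.2) (fun z => (z.2.2.2.1, z.2.1.2, z.1)) -
        condEnt pS (fun s => s.1) (fun s => s.2) := by
  have hmean := mean_congr (p := twJointMeasure nq pq pS px1 px2 chan) fun z hz =>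
    logScoreRatio_add_log_prD hpq hpS hpx1 hpx2 hchan (z := z) hz
  simp only [mean_add] at hmean
  simp only [condMutInf, condEnt, ent_eq_neg_mean_log_prD,
    ← mean_twJointMeasure_source (pS := pS) hpq hpx1 hpx2 hchan]
  linarith

lemma mean_exp_neg_mul_logScoreRatio (hpS : ∀ s, 0 ≤ pS s) (hpx1 : ∀ q s1 x1, 0 ≤ px1 q s1 x1)
    (hchan : ∀ x1 x2 y, 0 ≤ chan x1 x2 y) {ρ : ℝ} (hρ : ρ < 1) :
    mean (twJointMeasure nq pq pS px1 px2 chan)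
        (fun z => Real.exp (-ρ * logScoreRatio pS px1 chan z)) =
      mean pq fun q => tiltedBound ρ pS (px1 q) (px2 q) chan := by
  rw [mean_twJointMeasure]
  refine congrArg (mean pq) (funext fun q => ?_)
  rw [mean, tiltedBound]
  refine Finset.sum_congr rfl fun s _ => ?_
  rw [← mean_const_mul]
  refine mean_congr fun x1 hx1 => ?_
  rw [← mean_const_mul]
  refine congrArg (mean (px2 q s.2)) (funext fun x2 => ?_)
  refine (mul_mean_snd_eq_sum_score s x1 x2 fun y2 =>
    Real.exp (-ρ * (Real.log (score pS chan s.2 x2 y2 s.1 x1) -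
      Real.log (meanScore (px1 q) (score pS chan s.2 x2 y2))))).trans ?_
  refine Finset.sum_congr rfl fun y2 _ => ?_
  have hscore := score_nonneg hpS hchan s.2 x2 y2
  exact mul_exp_neg_mul_log_sub_log (hscore s.1 x1) (fun hpos =>
    meanScore_pos (hpx1 q) hscore (mul_pos ((hpx1 q s.1 x1).lt_of_ne' hx1) hpos)) hρ

lemma exists_tiltedBound_lt_one (hpq : IsPmf pq) (hpS : IsPmf pS)
    (hpx1 : ∀ q s1, IsPmf (px1 q s1)) (hpx2 : ∀ q s2, IsPmf (px2 q s2))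
    (hchan : ∀ x1 x2, IsPmf (chan x1 x2))
    (h : condEnt pS (fun s => s.1) (fun s => s.2) <
      condMutInf (twJointMeasure nq pq pS px1 px2 chan) (fun z => z.2.2.1)
        (fun z => z.2.2.2.2.2) (fun z => (z.2.2.2.1, z.2.1.2, z.1))) :
    ∃ ρ ∈ Set.Icc (0 : ℝ) 1,
      mean pq (fun q => tiltedBound ρ pS (px1 q) (px2 q) chan) ∈ Set.Ico 0 1 := by
  rw [← sub_pos, ← mean_logScoreRatio hpq hpS hpx1 hpx2 hchan] at h
  have hjoint := isPmf_twJointMeasure hpq hpS hpx1 hpx2 hchan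
  obtain ⟨ρ, hlt, hρ⟩ :=
    ((eventually_mean_exp_neg_mul_lt_one hjoint.2 h).and (Ioo_mem_nhdsGT zero_lt_one)).exists
  have hnonneg : 0 ≤ mean (twJointMeasure nq pq pS px1 px2 chan)
      fun z => Real.exp (-ρ * logScoreRatio pS px1 chan z) :=
    mean_nonneg hjoint.1 fun z => (Real.exp_pos _).le
  rw [mean_exp_neg_mul_logScoreRatio hpS.1 (fun q s1 => (hpx1 q s1).1)
    (fun x1 x2 => (hchan x1 x2).1) hρ.2] at hlt hnonneg
  exact ⟨ρ, Set.Ioo_subset_Icc_self hρ, hnonneg, hlt⟩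

lemma condEnt_swap :
    condEnt (pS ∘ Prod.swap) (fun s => s.1) (fun s => s.2) =
      condEnt pS (fun s => s.2) (fun s => s.1) :=
  condEnt_comp_equiv (Equiv.prodComm S2 S1) pS (fun s => s.2) fun s => s.1

lemma condMutInf_swap :
    condMutInf (twJointMeasure nq pq (pS ∘ Prod.swap) px2 px1 (swapChannel chan))
        (fun z => z.2.2.1) (fun z => z.2.2.2.2.2) (fun z => (z.2.2.2.1, z.2.1.2, z.1)) =
      condMutInf (twJointMeasure nq pq pS px1 px2 chan) (fun z => z.2.2.2.1)
        (fun z => z.2.2.2.2.1) (fun z => (z.2.2.1, z.2.1.1, z.1)) := by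
  rw [← twJointMeasure_comp_swapUsers]
  exact condMutInf_comp_equiv (swapUsers _ _ _ _ _ _ _) _ (fun z => z.2.2.2.1)
    (fun z => z.2.2.2.2.1) (fun z => (z.2.2.1, z.2.1.1, z.1))

end Information

/-- For arbitrarily correlated sources `(S1, S2)` over a DM two-way
channel `p(y1,y2|x1,x2)`, source-channel rate `b = 1` is achievable (with restricted
encoders) if `H(S1|S2) < I(X1;Y2|X2,S2,Q)` and `H(S2|S1) < I(X2;Y1|X1,S1,Q)` for some
joint distribution `p(q)p(s1,s2)p(x1|q,s1)p(x2|q,s2)p(y1,y2|x1,x2)`. -/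
theorem two_way_correlated_sources_rate_one_achievable
    {S1 S2 X1 X2 Y1 Y2 : Type}
    [Fintype S1] [Fintype S2] [Fintype X1] [Fintype X2] [Fintype Y1] [Fintype Y2]
    (pS : S1 × S2 → ℝ) (hpS : IsPmf pS)
    (chan : X1 → X2 → Y1 × Y2 → ℝ) (hchan : ∀ x1 x2, IsPmf (chan x1 x2))
    (h : ∃ (nq : ℕ) (pq : Fin nq → ℝ)
      (px1 : Fin nq → S1 → X1 → ℝ) (px2 : Fin nq → S2 → X2 → ℝ),
      IsPmf pq ∧ (∀ q s1, IsPmf (px1 q s1)) ∧ (∀ q s2, IsPmf (px2 q s2)) ∧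
      (condEnt pS (fun s => s.1) (fun s => s.2) <
        condMutInf (twJointMeasure nq pq pS px1 px2 chan)
          (fun z => z.2.2.1) (fun z => z.2.2.2.2.2)
          (fun z => (z.2.2.2.1, z.2.1.2, z.1))) ∧
      (condEnt pS (fun s => s.2) (fun s => s.1) <
        condMutInf (twJointMeasure nq pq pS px1 px2 chan)
          (fun z => z.2.2.2.1) (fun z => z.2.2.2.2.1)
          (fun z => (z.2.2.1, z.2.1.1, z.1)))) :
    twAchievableRestricted pS chan 1 := by
  obtain ⟨nq, pq, px1, px2, hpq, hpx1, hpx2, h1, h2⟩ := h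
  rw [← condEnt_swap, ← condMutInf_swap] at h2
  obtain ⟨ρ₂, hρ₂, hr₂⟩ := exists_tiltedBound_lt_one hpq hpS hpx1 hpx2 hchan h1
  obtain ⟨ρ₁, hρ₁, hr₁⟩ := exists_tiltedBound_lt_one hpq
    (hpS.comp_equiv (Equiv.prodComm S2 S1)) hpx2 hpx1 (isPmf_swapChannel hchan) h2
  intro ε hε
  have hlim := (tendsto_pow_atTop_nhds_zero_of_lt_one hr₂.1 hr₂.2).add
    (tendsto_pow_atTop_nhds_zero_of_lt_one hr₁.1 hr₁.2)
  rw [add_zero] at hlim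
  obtain ⟨n, hnε, hn⟩ := ((hlim.eventually_lt_const hε).and (Filter.eventually_gt_atTop 0)).exists
  obtain ⟨f1, f2, g1, g2, hle⟩ :=
    exists_twErrRestricted_le hpq hpS hchan hpx1 hpx2 hρ₁ hρ₂ (n := n)
  exact ⟨n, n, hn, hn, (one_mul _).symm, f1, f2, g1, g2, hle.trans_lt hnε⟩
end
end
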